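/- arXiv:2504.12478 — 2 statements merged into one kernel-verified Lean document; each statement's English description precedes it below -/
import Mathlib

section
/- Let X and Y be centered Gaussian random vectors in R^k satisfying E[(X_i − X_j)^2] ≤ E[(Y_i − Y_j)^2] for all 1 ≤ i, j ≤ k. Let σ = max_{1≤i≤k} sqrt(E[X_i^2] + E[Y_i^2]) and let g be a standard normal random variable. Then for every real m ≥ 1, E[(max_{1≤i≤k} |X_i|)^m] ≤ 2^{m−1} · (σ^m · E[|g|^m] + E[(max_{1≤i≤k} |Y_i|)^m]). -/
/-!
Gaussian comparison by interpolation. For independent centered Gaussian vectors `Z` and `W`, let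
`U θ = cos θ • Z + sin θ • W`. Gaussian integration by parts gives
`d/dθ E f(U θ) = cos θ sin θ E ∑ i j, ∂ᵢ∂ⱼ f(U θ) (Cov W - Cov Z) i j`. Take `f = φ(s)` with
`φ t = (m + t) ^ m` and `s` the soft maximum of `0` and the coordinates. Its Hessian at a point with
Gibbs weights `p` is `φ' (diag p - p pᵀ) + φ'' p pᵀ`. Since `φ'' ≤ φ'` and `∑ p ≤ 1`, the pairing of
this Hessian with `Cov W - Cov Z` is nonnegative as soon as the variances and the increments of `W`
dominate those of `Z`. Applying this to `l Z` and `l W` and letting `l → ∞` turns `f` into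
`‖x⁺‖ ^ m`: a Sudakov–Fernique inequality for `m`-th moments.

It is used for `(X, -X)` and `(W, -W)`, where `W = Y + σ g 1` with `g` independent of `Y`. Adding
`σ g` to every coordinate leaves the increments `W i - W j` unchanged, and gives
`E (W i + W j)² ≥ 4 σ² ≥ E (X i + X j)²`. Convexity of `t ^ m` then splits `‖W‖ ^ m`.
-/

open MeasureTheory ProbabilityTheory Real
open scoped NNReal BigOperators

/-- A random vector `X` on `(Ω, P)` is a centered Gaussian random vector if every
linear combination of its coordinates is a centered real Gaussian random variable. -/
def IsCenteredGaussianVec {Ω : Type*} [MeasurableSpace Ω] {k : ℕ}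
    (P : Measure Ω) (X : Ω → Fin k → ℝ) : Prop :=
  ∀ a : Fin k → ℝ,
    Measure.map (fun ω => ∑ i, a i * X ω i) P
      = gaussianReal 0 (variance (fun ω => ∑ i, a i * X ω i) P).toNNReal

section PolynomialGrowth

variable {E F G : Type*} [NormedAddCommGroup E] [NormedAddCommGroup F] [NormedAddCommGroup G]

/-- `f` has polynomial growth if `‖f x‖ ≤ C (1 + ‖x‖) ^ N` for some `C` and `N`; measurable
functions of polynomial growth are integrable against every Gaussian measure. -/
def HasPolynomialGrowth (f : E → F) : Prop :=
  ∃ N : ℕ, f =O[⊤] fun x ↦ (1 + ‖x‖) ^ N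

namespace HasPolynomialGrowth

lemma of_norm_le {f : E → F} {C : ℝ} {N : ℕ} (h : ∀ x, ‖f x‖ ≤ C * (1 + ‖x‖) ^ N) :
    HasPolynomialGrowth f := by
  refine ⟨N, Asymptotics.isBigO_top.2 ⟨C, fun x ↦ (h x).trans_eq ?_⟩⟩
  rw [norm_of_nonneg (by positivity)]

lemma of_norm_le_const {f : E → F} {C : ℝ} (h : ∀ x, ‖f x‖ ≤ C) : HasPolynomialGrowth f :=
  of_norm_le (N := 0) (by simpa using h)

lemma exists_pos_norm_le {f : E → F} (hf : HasPolynomialGrowth f) :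
    ∃ C > 0, ∃ N : ℕ, ∀ x, ‖f x‖ ≤ C * (1 + ‖x‖) ^ N := by
  obtain ⟨N, hN⟩ := hf
  obtain ⟨C, hC, hfC⟩ := hN.exists_pos
  refine ⟨C, hC, N, fun x ↦ (Asymptotics.isBigOWith_top.1 hfC x).trans_eq ?_⟩
  rw [norm_of_nonneg (by positivity)]

lemma add {f g : E → F} (hf : HasPolynomialGrowth f) (hg : HasPolynomialGrowth g) :
    HasPolynomialGrowth fun x ↦ f x + g x := by
  obtain ⟨C, hC, N, hf⟩ := hf.exists_pos_norm_le
  obtain ⟨K, hK, M, hg⟩ := hg.exists_pos_norm_le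
  refine of_norm_le (C := C + K) (N := max N M) fun x ↦ ?_
  have h1 : 1 ≤ 1 + ‖x‖ := by simp
  calc ‖f x + g x‖ ≤ C * (1 + ‖x‖) ^ N + K * (1 + ‖x‖) ^ M := norm_add_le_of_le (hf x) (hg x)
    _ ≤ C * (1 + ‖x‖) ^ max N M + K * (1 + ‖x‖) ^ max N M := by
        gcongr ?_ * ?_ + ?_ * ?_
        exacts [pow_le_pow_right₀ h1 (le_max_left ..), pow_le_pow_right₀ h1 (le_max_right ..)]
    _ = (C + K) * (1 + ‖x‖) ^ max N M := by ring

lemma smul [NormedSpace ℝ F] {f : E → ℝ} {g : E → F} (hf : HasPolynomialGrowth f)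
    (hg : HasPolynomialGrowth g) : HasPolynomialGrowth fun x ↦ f x • g x := by
  obtain ⟨N, hf⟩ := hf
  obtain ⟨M, hg⟩ := hg
  exact ⟨N + M, by simpa only [smul_eq_mul, pow_add] using hf.smul hg⟩

lemma clm_comp [NormedSpace ℝ F] [NormedSpace ℝ G] {f : E → F} (hf : HasPolynomialGrowth f)
    (L : F →L[ℝ] G) : HasPolynomialGrowth fun x ↦ L (f x) := by
  obtain ⟨N, hf⟩ := hf
  exact ⟨N, (L.isBigO_comp f ⊤).trans hf⟩

variable [NormedSpace ℝ E]

lemma clm [NormedSpace ℝ F] (L : E →L[ℝ] F) : HasPolynomialGrowth L :=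
  of_norm_le (C := ‖L‖) (N := 1) fun x ↦ (L.le_opNorm x).trans (by gcongr; simp)

lemma comp_clm [NormedSpace ℝ F] {f : F → G} (hf : HasPolynomialGrowth f) (L : E →L[ℝ] F) :
    HasPolynomialGrowth fun x ↦ f (L x) := by
  obtain ⟨C, hC, N, hf⟩ := hf.exists_pos_norm_le
  refine of_norm_le (C := C * (1 + ‖L‖) ^ N) (N := N) fun x ↦ (hf _).trans ?_
  rw [mul_assoc, ← mul_pow]
  gcongr
  nlinarith [L.le_opNorm x, norm_nonneg L, norm_nonneg x]

lemma integrable [CompleteSpace E] [SecondCountableTopology E] [MeasurableSpace E] [BorelSpace E]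
    {μ : Measure E} [IsGaussian μ] {f : E → F} (hf : HasPolynomialGrowth f)
    (hfμ : AEStronglyMeasurable f μ) : Integrable f μ := by
  obtain ⟨C, -, N, hf⟩ := hf.exists_pos_norm_le
  have hid : MemLp (fun x : E ↦ 1 + ‖x‖) N μ :=
    (memLp_const (1 : ℝ)).add (IsGaussian.memLp_id μ N (ENNReal.natCast_ne_top N)).norm
  refine (hid.integrable_norm_pow'.const_mul C).mono' hfμ (ae_of_all _ fun x ↦ ?_)
  rw [norm_of_nonneg (by positivity : 0 ≤ 1 + ‖x‖)]
  exact hf x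

end HasPolynomialGrowth

end PolynomialGrowth

section Stein

lemma hasDerivAt_gaussianPDFReal (μ : ℝ) (v : ℝ≥0) (x : ℝ) :
    HasDerivAt (gaussianPDFReal μ v) (-((x - μ) / v) * gaussianPDFReal μ v x) x := by
  have hexp : HasDerivAt (fun x : ℝ ↦ -(x - μ) ^ 2 / (2 * (v : ℝ))) (-((x - μ) / v)) x :=
    (((((hasDerivAt_id x).sub_const μ).pow 2).neg).div_const (2 * (v : ℝ))).congr_deriv (by
      simp only [id_eq, Nat.cast_ofNat]; ring)
  rw [gaussianPDFReal_def]
  exact (hexp.exp.const_mul (√(2 * π * v))⁻¹).congr_deriv (by ring)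

lemma integrable_gaussianReal_iff {μ : ℝ} {v : ℝ≥0} (hv : v ≠ 0) {f : ℝ → ℝ} :
    Integrable f (gaussianReal μ v) ↔ Integrable fun x ↦ gaussianPDFReal μ v x * f x := by
  rw [gaussianReal_of_var_ne_zero _ hv, integrable_withDensity_iff_integrable_smul'
    (measurable_gaussianPDF _ _) (ae_of_all _ fun _ ↦ gaussianPDF_lt_top)]
  simp only [toReal_gaussianPDF, smul_eq_mul]

lemma integral_sub_mul_gaussianReal {μ : ℝ} {v : ℝ≥0} {f f' : ℝ → ℝ}
    (hf : ∀ x, HasDerivAt f (f' x) x)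
    (hfi : Integrable f (gaussianReal μ v)) (hf'i : Integrable f' (gaussianReal μ v))
    (hxfi : Integrable (fun x ↦ (x - μ) * f x) (gaussianReal μ v)) :
    ∫ x, (x - μ) * f x ∂gaussianReal μ v = v * ∫ x, f' x ∂gaussianReal μ v := by
  rcases eq_or_ne v 0 with rfl | hv
  · simp [gaussianReal_zero_var]
  have hv' : (v : ℝ) ≠ 0 := NNReal.coe_ne_zero.2 hv
  rw [integrable_gaussianReal_iff hv] at hfi hf'i hxfi
  have parts := integral_mul_deriv_eq_deriv_mul_of_integrable (fun x _ ↦ hf x)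
    (fun x _ ↦ hasDerivAt_gaussianPDFReal μ v x)
    ((hxfi.const_mul (-(v : ℝ)⁻¹)).congr (ae_of_all _ fun x ↦ by
      simp only [Pi.mul_apply]; ring))
    (hf'i.congr (ae_of_all _ fun x ↦ mul_comm ..))
    (hfi.congr (ae_of_all _ fun x ↦ mul_comm ..))
  simp only [integral_gaussianReal_eq_integral_smul hv, smul_eq_mul]
  calc ∫ x, gaussianPDFReal μ v x * ((x - μ) * f x)
      = ∫ x, -v * (f x * (-((x - μ) / v) * gaussianPDFReal μ v x)) :=
        integral_congr_ae (ae_of_all _ fun x ↦ by field_simp)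
    _ = v * ∫ x, f' x * gaussianPDFReal μ v x := by rw [integral_const_mul, parts]; ring
    _ = v * ∫ x, gaussianPDFReal μ v x * f' x := by simp only [mul_comm]

variable {E : Type*} [NormedAddCommGroup E] [NormedSpace ℝ E] [MeasurableSpace E]

lemma integral_fst_mul_comp_gaussianReal_prod {v : ℝ≥0} {ν : Measure E} [SFinite ν]
    {ψ : E → ℝ} {ψ' : E → StrongDual ℝ E} (hψ : ∀ x, HasFDerivAt ψ (ψ' x) x) (c : E)
    (hψi : Integrable (fun p : ℝ × E ↦ ψ (p.2 + p.1 • c)) ((gaussianReal 0 v).prod ν))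
    (hψ'i : Integrable (fun p : ℝ × E ↦ ψ' (p.2 + p.1 • c) c) ((gaussianReal 0 v).prod ν))
    (htψi : Integrable (fun p : ℝ × E ↦ p.1 * ψ (p.2 + p.1 • c)) ((gaussianReal 0 v).prod ν)) :
    ∫ p : ℝ × E, p.1 * ψ (p.2 + p.1 • c) ∂(gaussianReal 0 v).prod ν
      = v * ∫ p : ℝ × E, ψ' (p.2 + p.1 • c) c ∂(gaussianReal 0 v).prod ν := by
  rw [integral_prod_symm _ htψi, integral_prod_symm _ hψ'i, ← integral_const_mul]
  refine integral_congr_ae ?_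
  filter_upwards [hψi.prod_left_ae, hψ'i.prod_left_ae, htψi.prod_left_ae] with u h h' ht
  have hline (t : ℝ) : HasDerivAt (fun t ↦ ψ (u + t • c)) (ψ' (u + t • c) c) t := by
    have := ((hasDerivAt_id t).smul_const c).const_add u
    rw [one_smul] at this
    exact (hψ _).comp_hasDerivAt t this
  simpa only [sub_zero] using
    integral_sub_mul_gaussianReal hline h h' (by simpa only [sub_zero] using ht)

variable [CompleteSpace E] [BorelSpace E] [SecondCountableTopology E]
  {μ : Measure E} [IsGaussian μ]

lemma integrable_dual_smul_self (μ : Measure E) [IsGaussian μ] (ℓ : StrongDual ℝ E) :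
    Integrable (fun x ↦ ℓ x • x) μ :=
  ((HasPolynomialGrowth.clm ℓ).smul (.clm (.id ℝ E))).integrable (by fun_prop)

lemma covariance_dual_eq_of_integral_eq_zero (hμ : ∫ x, x ∂μ = 0) (ℓ ℓ' : StrongDual ℝ E) :
    cov[ℓ, ℓ'; μ] = ℓ' (∫ x, ℓ x • x ∂μ) := by
  have hℓ' : ∫ x, ℓ' x ∂μ = 0 := by rw [IsGaussian.integral_dual, hμ, map_zero]
  rw [covariance_eq_sub (IsGaussian.memLp_dual μ ℓ 2 (by simp))
    (IsGaussian.memLp_dual μ ℓ' 2 (by simp)), hℓ', mul_zero, sub_zero,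
    ← ℓ'.integral_comp_comm (integrable_dual_smul_self μ ℓ)]
  simp only [map_smul, smul_eq_mul, Pi.mul_apply]

lemma exists_variance_smul_eq_integral (hμ : ∫ x, x ∂μ = 0) (ℓ : StrongDual ℝ E) :
    ∃ c, Var[ℓ; μ] • c = ∫ x, ℓ x • x ∂μ := by
  rcases eq_or_ne Var[ℓ; μ] 0 with h0 | h0
  · have hℓ : ℓ =ᵐ[μ] 0 := by
      filter_upwards [ae_eq_integral_of_variance_eq_zero
        (IsGaussian.memLp_dual μ ℓ 2 (by simp)) h0] with x hx
      rw [hx, IsGaussian.integral_dual, hμ, map_zero, Pi.zero_apply]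
    refine ⟨0, ?_⟩
    rw [smul_zero, eq_comm]
    exact integral_eq_zero_of_ae (hℓ.mono fun x hx ↦ by simp [hx])
  · exact ⟨_, smul_inv_smul₀ h0 _⟩

lemma map_dual_prodMk_sub_smul (hμ : ∫ x, x ∂μ = 0) (ℓ : StrongDual ℝ E) {c : E}
    (hc : Var[ℓ; μ] • c = ∫ x, ℓ x • x ∂μ) :
    μ.map (fun x ↦ (ℓ x, x - ℓ x • c))
      = (gaussianReal 0 Var[ℓ; μ].toNNReal).prod (μ.map fun x ↦ x - ℓ x • c) := by
  let T : E →L[ℝ] E := .id ℝ E - ℓ.smulRight c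
  have hT : T (∫ x, ℓ x • x ∂μ) = 0 := by
    have : ℓ (∫ x, ℓ x • x ∂μ) = Var[ℓ; μ] := by
      rw [← covariance_dual_eq_of_integral_eq_zero hμ, covariance_self (by fun_prop)]
    simp [T, this, hc]
  have hind : IndepFun ℓ T μ := by
    have hlaw : HasGaussianLaw (fun x ↦ (ℓ x, T x)) μ := ⟨isGaussian_map (ℓ.prod T)⟩
    refine hlaw.indepFun_of_covariance_strongDual fun L₁ L₂ ↦ ?_
    have hL₁ (x : E) : L₁ (ℓ x) = L₁ 1 * ℓ x := by
      rw [mul_comm, ← smul_eq_mul, ← map_smul, smul_eq_mul, mul_one]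
    calc cov[L₁ ∘ ℓ, L₂ ∘ T; μ] = L₂ (T (∫ x, L₁ (ℓ x) • x ∂μ)) :=
          covariance_dual_eq_of_integral_eq_zero hμ (L₁ ∘L ℓ) (L₂ ∘L T)
      _ = 0 := by simp only [hL₁, mul_smul, integral_smul, map_smul, hT, map_zero, smul_zero]
  have hℓ : μ.map ℓ = gaussianReal 0 Var[ℓ; μ].toNNReal := by
    rw [IsGaussian.map_eq_gaussianReal, IsGaussian.integral_dual, hμ, map_zero]
  rw [← hℓ]
  exact (indepFun_iff_map_prod_eq_prod_map_map (by fun_prop) (by fun_prop)).1 hind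

theorem integral_dual_mul_eq_integral_fderiv (hμ : ∫ x, x ∂μ = 0) (ℓ : StrongDual ℝ E)
    {ψ : E → ℝ} {ψ' : E → StrongDual ℝ E} (hψ : ∀ x, HasFDerivAt ψ (ψ' x) x)
    (hψi : Integrable ψ μ) (hψ'i : ∀ c, Integrable (fun x ↦ ψ' x c) μ)
    (hℓψi : Integrable (fun x ↦ ℓ x * ψ x) μ) :
    ∫ x, ℓ x * ψ x ∂μ = ∫ x, ψ' x (∫ y, ℓ y • y ∂μ) ∂μ := by
  -- `ℓ x` and `x - ℓ x • c` are independent, so the one-dimensional formula applies in `ℓ x`.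
  obtain ⟨c, hc⟩ := exists_variance_smul_eq_integral hμ ℓ
  have hψc : Continuous ψ := continuous_iff_continuousAt.2 fun x ↦ (hψ x).continuousAt
  have hψ'm : Measurable fun x ↦ ψ' x c := by
    simpa only [(hψ _).fderiv] using measurable_fderiv_apply_const ℝ ψ c
  have hψ'm' : Measurable fun p : ℝ × E ↦ ψ' (p.2 + p.1 • c) c := hψ'm.comp (by fun_prop)
  have hstein := integral_fst_mul_comp_gaussianReal_prod (v := Var[ℓ; μ].toNNReal)
    (ν := μ.map fun x ↦ x - ℓ x • c) hψ c
  rw [← map_dual_prodMk_sub_smul hμ ℓ hc, integrable_map_measure (by fun_prop) (by fun_prop),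
    integrable_map_measure hψ'm'.aestronglyMeasurable (by fun_prop),
    integrable_map_measure (by fun_prop) (by fun_prop), integral_map (by fun_prop) (by fun_prop),
    integral_map (by fun_prop) hψ'm'.aestronglyMeasurable] at hstein
  simp only [Function.comp_def, sub_add_cancel] at hstein
  rw [hstein hψi (hψ'i c) hℓψi, Real.coe_toNNReal _ (variance_nonneg _ _), ← integral_const_mul,
    ← hc]
  simp only [map_smul, smul_eq_mul]

end Stein

section Rotation

variable {E : Type*} [NormedAddCommGroup E] [NormedSpace ℝ E]

/-- The rotation path `(z, w) ↦ cos θ • z + sin θ • w` from `z` (at `θ = 0`) to `w`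
(at `θ = π / 2`); its derivative in `θ` is `rot (θ + π / 2)`. -/
noncomputable def rot (θ : ℝ) : E × E →L[ℝ] E := cos θ • .fst ℝ E E + sin θ • .snd ℝ E E

lemma rot_apply (θ : ℝ) (ξ : E × E) : rot θ ξ = cos θ • ξ.1 + sin θ • ξ.2 := rfl

lemma hasDerivAt_rot (θ : ℝ) (ξ : E × E) :
    HasDerivAt (fun θ ↦ rot θ ξ) (rot (θ + π / 2) ξ) θ := by
  simp only [rot_apply, cos_add_pi_div_two, sin_add_pi_div_two]
  exact ((hasDerivAt_cos θ).smul_const ξ.1).add ((hasDerivAt_sin θ).smul_const ξ.2)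

lemma norm_rot_apply_le (θ : ℝ) (ξ : E × E) : ‖rot θ ξ‖ ≤ 2 * ‖ξ‖ := by
  have h1 : ‖cos θ • ξ.1‖ ≤ 1 * ‖ξ‖ := by
    rw [norm_smul]
    gcongr
    exacts [abs_cos_le_one θ, norm_fst_le ξ]
  have h2 : ‖sin θ • ξ.2‖ ≤ 1 * ‖ξ‖ := by
    rw [norm_smul]
    gcongr
    exacts [abs_sin_le_one θ, norm_snd_le ξ]
  rw [rot_apply]
  linarith [norm_add_le (cos θ • ξ.1) (sin θ • ξ.2)]

variable [CompleteSpace E] [MeasurableSpace E] [BorelSpace E] [SecondCountableTopology E]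

lemma integrable_comp_rot {ρ : Measure (E × E)} [IsGaussian ρ] {f : E → ℝ}
    (hf : Continuous f) (hfg : HasPolynomialGrowth f) (θ : ℝ) :
    Integrable (fun ξ ↦ f (rot θ ξ)) ρ :=
  (hfg.comp_clm (rot θ)).integrable (by fun_prop)

lemma hasDerivAt_integral_comp_rot {ρ : Measure (E × E)} [IsGaussian ρ] {f : E → ℝ}
    {f' : E → StrongDual ℝ E} (hf : ∀ x, HasFDerivAt f (f' x) x) (hf'c : Continuous f')
    (hfg : HasPolynomialGrowth f) (hf'g : HasPolynomialGrowth f') (θ : ℝ) :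
    HasDerivAt (fun θ ↦ ∫ ξ, f (rot θ ξ) ∂ρ) (∫ ξ, f' (rot θ ξ) (rot (θ + π / 2) ξ) ∂ρ) θ := by
  have hfc : Continuous f := continuous_iff_continuousAt.2 fun x ↦ (hf x).continuousAt
  obtain ⟨C, hC, N, hf'b⟩ := hf'g.exists_pos_norm_le
  have hbound (t : ℝ) (ξ : E × E) :
      ‖f' (rot t ξ) (rot (t + π / 2) ξ)‖ ≤ C * (1 + 2 * ‖ξ‖) ^ N * (2 * ‖ξ‖) := by
    refine (f' (rot t ξ)).le_of_opNorm_le_of_le ((hf'b _).trans ?_) (norm_rot_apply_le _ ξ)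
    gcongr
    exact norm_rot_apply_le t ξ
  have hbg : HasPolynomialGrowth fun ξ : E × E ↦ C * (1 + 2 * ‖ξ‖) ^ N * (2 * ‖ξ‖) := by
    refine .of_norm_le (C := C * 2 ^ N * 2) (N := N + 1) fun ξ ↦ ?_
    rw [norm_of_nonneg (by positivity)]
    calc C * (1 + 2 * ‖ξ‖) ^ N * (2 * ‖ξ‖) ≤ C * (2 * (1 + ‖ξ‖)) ^ N * (2 * (1 + ‖ξ‖)) := by
          gcongr <;> linarith
      _ = C * 2 ^ N * 2 * (1 + ‖ξ‖) ^ (N + 1) := by rw [mul_pow]; ring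
  refine (hasDerivAt_integral_of_dominated_loc_of_deriv_le Filter.univ_mem
    (.of_forall fun t ↦ (integrable_comp_rot hfc hfg t).aestronglyMeasurable)
    (integrable_comp_rot hfc hfg θ) (Continuous.aestronglyMeasurable (by fun_prop))
    (ae_of_all _ fun ξ t _ ↦ hbound t ξ)
    (hbg.integrable (by fun_prop)) (ae_of_all _ fun ξ t _ ↦ ?_)).2
  exact (hf _).comp_hasDerivAt t (hasDerivAt_rot t ξ)

end Rotation

section ProdMoments

variable {α β : Type*} [MeasurableSpace α] [MeasurableSpace β] {μ : Measure α} {ν : Measure β}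
  [IsProbabilityMeasure μ] [IsProbabilityMeasure ν]

lemma integral_prod_add_mul_add {f f' : α → ℝ} {g g' : β → ℝ} (hf : MemLp f 2 μ)
    (hf' : MemLp f' 2 μ) (hg : MemLp g 2 ν) (hg' : MemLp g' 2 ν)
    (hf0 : ∫ x, f x ∂μ = 0) (hf'0 : ∫ x, f' x ∂μ = 0) :
    ∫ p, (f p.1 + g p.2) * (f' p.1 + g' p.2) ∂μ.prod ν
      = ∫ x, f x * f' x ∂μ + ∫ y, g y * g' y ∂ν := by
  have hff' : Integrable (fun p : α × β ↦ f p.1 * f' p.1) (μ.prod ν) :=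
    (hf.integrable_mul hf').comp_fst ν
  have hgg' : Integrable (fun p : α × β ↦ g p.2 * g' p.2) (μ.prod ν) :=
    (hg.integrable_mul hg').comp_snd μ
  have hfg' : Integrable (fun p : α × β ↦ f p.1 * g' p.2) (μ.prod ν) :=
    (hf.integrable one_le_two).mul_prod (hg'.integrable one_le_two)
  have hf'g : Integrable (fun p : α × β ↦ f' p.1 * g p.2) (μ.prod ν) :=
    (hf'.integrable one_le_two).mul_prod (hg.integrable one_le_two)
  calc ∫ p, (f p.1 + g p.2) * (f' p.1 + g' p.2) ∂μ.prod ν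
      = ∫ p, f p.1 * f' p.1 + g p.2 * g' p.2 + (f p.1 * g' p.2 + f' p.1 * g p.2) ∂μ.prod ν := by
        congr with p; ring
    _ = ∫ x, f x * f' x ∂μ + ∫ y, g y * g' y ∂ν := by
        rw [integral_add (by fun_prop) (by fun_prop), integral_add hff' hgg',
          integral_add hfg' hf'g,
          integral_prod_mul, integral_prod_mul, hf0, hf'0,
          integral_fun_fst (fun x ↦ f x * f' x), integral_fun_snd (fun y ↦ g y * g' y)]
        simp only [probReal_univ, one_smul, zero_mul, add_zero]

end ProdMoments

section Comparison

variable {ι : Type*}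

lemma memLp_two_apply (μ : Measure (ι → ℝ)) [IsGaussian μ] (i : ι) :
    MemLp (fun x : ι → ℝ ↦ x i) 2 μ :=
  ((IsGaussian.hasGaussianLaw_id (μ := μ)).eval i).memLp_two

variable [Fintype ι]

/-- The dot product `c ↦ (x ↦ ∑ i, c i * x i)`, identifying gradients with derivatives. -/
noncomputable def dotProductCLM : (ι → ℝ) →L[ℝ] StrongDual ℝ (ι → ℝ) :=
  ∑ i, (ContinuousLinearMap.proj i : StrongDual ℝ (ι → ℝ)).smulRight (.proj i)

lemma dotProductCLM_apply (c x : ι → ℝ) : dotProductCLM c x = ∑ i, c i * x i := by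
  simp [dotProductCLM]

/-- The `i`-th row `(∫ x i * x j ∂μ)_j` of the matrix of second moments of `μ`. -/
noncomputable def secondMoment (μ : Measure (ι → ℝ)) (i : ι) : ι → ℝ := ∫ x, x i • x ∂μ

variable {μ ν : Measure (ι → ℝ)} [IsGaussian μ] [IsGaussian ν]

lemma secondMoment_apply (i j : ι) : secondMoment μ i j = ∫ x, x i * x j ∂μ :=
  eval_integral (fun j ↦ (integrable_dual_smul_self μ (.proj i)).eval j) j

lemma integral_apply_eq_zero (hμ : ∫ x, x ∂μ = 0) (i : ι) : ∫ x, x i ∂μ = 0 := by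
  have h := IsGaussian.integral_dual (μ := μ) (.proj i)
  rwa [hμ, map_zero] at h

lemma integral_prod_self_eq_zero (hμ : ∫ x, x ∂μ = 0) (hν : ∫ x, x ∂ν = 0) :
    ∫ ξ, ξ ∂μ.prod ν = 0 := by
  have hi : Integrable (fun ξ ↦ ξ) (μ.prod ν) := IsGaussian.integrable_fun_id
  apply Prod.ext
  · rw [fst_integral hi, integral_fun_fst (fun x ↦ x), hμ, smul_zero, Prod.fst_zero]
  · rw [snd_integral hi, integral_fun_snd (fun x ↦ x), hν, smul_zero, Prod.snd_zero]

lemma rot_integral_rot_smul (hμ : ∫ x, x ∂μ = 0) (θ : ℝ) (i : ι) :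
    rot θ (∫ ξ, rot (θ + π / 2) ξ i • ξ ∂μ.prod ν)
      = (cos θ * sin θ) • (secondMoment ν i - secondMoment μ i) := by
  have hmem (ρ : Measure (ι → ℝ)) [IsGaussian ρ] (a : ℝ) (j : ι) :
      MemLp (fun x : ι → ℝ ↦ a * x j) 2 ρ := (memLp_two_apply ρ j).const_mul a
  have hzero (a : ℝ) (j : ι) : ∫ x, a * x j ∂μ = 0 := by
    rw [integral_const_mul, integral_apply_eq_zero hμ, mul_zero]
  have hi := integrable_dual_smul_self (μ.prod ν) (.proj i ∘L rot (θ + π / 2))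
  let R (j : ι) : StrongDual ℝ ((ι → ℝ) × (ι → ℝ)) := .proj j ∘L rot θ
  ext j
  calc rot θ (∫ ξ, rot (θ + π / 2) ξ i • ξ ∂μ.prod ν) j
      = ∫ ξ, (-sin θ * ξ.1 i + cos θ * ξ.2 i) * (cos θ * ξ.1 j + sin θ * ξ.2 j) ∂μ.prod ν := by
        refine ((R j).integral_comp_comm hi).symm.trans (integral_congr_ae (ae_of_all _ fun ξ ↦ ?_))
        simp [R, rot_apply, cos_add_pi_div_two, sin_add_pi_div_two]
    _ = ∫ x, -sin θ * x i * (cos θ * x j) ∂μ + ∫ x, cos θ * x i * (sin θ * x j) ∂ν :=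
        integral_prod_add_mul_add (hmem μ _ i) (hmem μ _ j) (hmem ν _ i) (hmem ν _ j)
          (hzero _ i) (hzero _ j)
    _ = ∫ x, -sin θ * cos θ * (x i * x j) ∂μ + ∫ x, cos θ * sin θ * (x i * x j) ∂ν := by
        congr! 3 with x x <;> ring
    _ = ((cos θ * sin θ) • (secondMoment ν i - secondMoment μ i)) j := by
        simp only [integral_const_mul, Pi.smul_apply, Pi.sub_apply,
          secondMoment_apply, smul_eq_mul]
        ring

variable {f : (ι → ℝ) → ℝ} {G : (ι → ℝ) → ι → ℝ} {G' : (ι → ℝ) → (ι → ℝ) →L[ℝ] ι → ℝ}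

theorem integral_deriv_comp_rot (hμ : ∫ x, x ∂μ = 0) (hν : ∫ x, x ∂ν = 0)
    (hG : ∀ x, HasFDerivAt G (G' x) x) (hG'c : Continuous G')
    (hGg : HasPolynomialGrowth G) (hG'g : HasPolynomialGrowth G') (θ : ℝ) :
    ∫ ξ, dotProductCLM (G (rot θ ξ)) (rot (θ + π / 2) ξ) ∂μ.prod ν
      = cos θ * sin θ
        * ∫ ξ, ∑ i, G' (rot θ ξ) (secondMoment ν i - secondMoment μ i) i ∂μ.prod ν := by
  have hGc : Continuous G := continuous_iff_continuousAt.2 fun x ↦ (hG x).continuousAt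
  let ℓ (i : ι) : StrongDual ℝ ((ι → ℝ) × (ι → ℝ)) := .proj i ∘L rot (θ + π / 2)
  have hGi (i : ι) : HasPolynomialGrowth fun ξ ↦ G (rot θ ξ) i :=
    (hGg.comp_clm (rot θ)).clm_comp (.proj i)
  have hG'i (i : ι) (c : ι → ℝ) : HasPolynomialGrowth fun ξ ↦ G' (rot θ ξ) c i :=
    ((hG'g.comp_clm (rot θ)).clm_comp (.apply ℝ (ι → ℝ) c)).clm_comp (.proj i)
  have hintegrable (i : ι) : Integrable (fun ξ ↦ ℓ i ξ * G (rot θ ξ) i) (μ.prod ν) :=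
    ((HasPolynomialGrowth.clm (ℓ i)).smul (hGi i)).integrable (by fun_prop)
  have hstein (i : ι) : ∫ ξ, ℓ i ξ * G (rot θ ξ) i ∂μ.prod ν = cos θ * sin θ
      * ∫ ξ, G' (rot θ ξ) (secondMoment ν i - secondMoment μ i) i ∂μ.prod ν := by
    have hderiv (ξ : (ι → ℝ) × (ι → ℝ)) : HasFDerivAt (fun ξ ↦ G (rot θ ξ) i)
        (.proj i ∘L G' (rot θ ξ) ∘L rot θ) ξ :=
      hasFDerivAt_pi'.1 ((hG (rot θ ξ)).comp ξ (rot (E := ι → ℝ) θ).hasFDerivAt) i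
    calc ∫ ξ, ℓ i ξ * G (rot θ ξ) i ∂μ.prod ν
        = ∫ ξ, G' (rot θ ξ) (rot θ (∫ η, rot (θ + π / 2) η i • η ∂μ.prod ν)) i ∂μ.prod ν :=
          integral_dual_mul_eq_integral_fderiv (integral_prod_self_eq_zero hμ hν) (ℓ i) hderiv
            ((hGi i).integrable (by fun_prop))
            (fun c ↦ (hG'i i (rot θ c)).integrable (by fun_prop)) (hintegrable i)
      _ = _ := by
          simp only [rot_integral_rot_smul hμ, map_smul, Pi.smul_apply, smul_eq_mul,
            integral_const_mul]
  calc ∫ ξ, dotProductCLM (G (rot θ ξ)) (rot (θ + π / 2) ξ) ∂μ.prod ν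
      = ∑ i, ∫ ξ, ℓ i ξ * G (rot θ ξ) i ∂μ.prod ν := by
        rw [← integral_finsetSum _ fun i _ ↦ hintegrable i]
        simp only [dotProductCLM_apply, mul_comm, ℓ, ContinuousLinearMap.comp_apply,
          ContinuousLinearMap.proj_apply]
    _ = _ := by
        simp only [hstein]
        rw [← Finset.mul_sum,
          integral_finsetSum _ fun i _ ↦ (hG'i i _).integrable (by fun_prop)]

theorem integral_le_integral_of_secondMoment (hμ : ∫ x, x ∂μ = 0) (hν : ∫ x, x ∂ν = 0)
    (hf : ∀ x, HasFDerivAt f (dotProductCLM (G x)) x) (hG : ∀ x, HasFDerivAt G (G' x) x)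
    (hG'c : Continuous G') (hfg : HasPolynomialGrowth f) (hGg : HasPolynomialGrowth G)
    (hG'g : HasPolynomialGrowth G')
    (hpos : ∀ x, 0 ≤ ∑ i, G' x (secondMoment ν i - secondMoment μ i) i) :
    ∫ x, f x ∂μ ≤ ∫ x, f x ∂ν := by
  have hGc : Continuous G := continuous_iff_continuousAt.2 fun x ↦ (hG x).continuousAt
  have hderiv := hasDerivAt_integral_comp_rot (ρ := μ.prod ν) hf
    (dotProductCLM.continuous.comp hGc) hfg (hGg.clm_comp dotProductCLM)
  have hmono : MonotoneOn (fun θ ↦ ∫ ξ, f (rot θ ξ) ∂μ.prod ν) (Set.Icc 0 (π / 2)) := by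
    refine monotoneOn_of_deriv_nonneg (convex_Icc _ _)
      (fun θ _ ↦ (hderiv θ).continuousAt.continuousWithinAt)
      (fun θ _ ↦ (hderiv θ).differentiableAt.differentiableWithinAt) fun θ hθ ↦ ?_
    rw [interior_Icc] at hθ
    rw [(hderiv θ).deriv, integral_deriv_comp_rot hμ hν hG hG'c hGg hG'g]
    exact mul_nonneg (mul_nonneg (cos_nonneg_of_mem_Icc ⟨by linarith [hθ.1, pi_pos], hθ.2.le⟩)
      (sin_nonneg_of_mem_Icc ⟨hθ.1.le, by linarith [hθ.2, pi_pos]⟩))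
      (integral_nonneg fun ξ ↦ hpos _)
  have h := hmono (Set.left_mem_Icc.2 (by positivity)) (Set.right_mem_Icc.2 (by positivity))
    (by positivity)
  simpa [rot_apply, integral_fun_fst, integral_fun_snd] using h

end Comparison

section SoftMax

variable {ι : Type*} [Fintype ι]

lemma sum_mul_sum_mul_le_sum_mul_diag {p : ι → ℝ} {D : ι → ι → ℝ} (hp : ∀ i, 0 ≤ p i)
    (hp1 : ∑ i, p i ≤ 1) (hD : ∀ i, 0 ≤ D i i) (hDD : ∀ i j, D i j + D j i ≤ D i i + D j j) :
    ∑ i, p i * ∑ j, p j * D i j ≤ ∑ i, p i * D i i := by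
  have hsymm : 2 * ∑ i, p i * ∑ j, p j * D i j = ∑ i, ∑ j, p i * p j * (D i j + D j i) := by
    simp only [mul_add, Finset.sum_add_distrib]
    rw [Finset.sum_comm (f := fun i j ↦ p i * p j * D j i), two_mul]
    simp only [Finset.mul_sum, mul_assoc, mul_left_comm]
  have hdiag : ∑ i, ∑ j, p i * p j * (D i i + D j j) = 2 * ((∑ i, p i) * ∑ i, p i * D i i) := by
    simp only [mul_add, Finset.sum_add_distrib]
    rw [Finset.sum_comm (f := fun i j ↦ p i * p j * D i i), two_mul, Finset.sum_mul_sum]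
    simp only [mul_assoc, mul_left_comm]
  have hle : ∑ i, ∑ j, p i * p j * (D i j + D j i) ≤ ∑ i, ∑ j, p i * p j * (D i i + D j j) :=
    Finset.sum_le_sum fun i _ ↦ Finset.sum_le_sum fun j _ ↦
      mul_le_mul_of_nonneg_left (hDD i j) (mul_nonneg (hp i) (hp j))
  have hT : (∑ i, p i) * ∑ i, p i * D i i ≤ ∑ i, p i * D i i :=
    mul_le_of_le_one_left (Finset.sum_nonneg fun i _ ↦ mul_nonneg (hp i) (hD i)) hp1
  linarith

lemma norm_posPart_smul {l : ℝ} (hl : 0 ≤ l) (x : ι → ℝ) : ‖(l • x)⁺‖ = l * ‖x⁺‖ := by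
  have h : (l • x)⁺ = l • x⁺ := by
    ext i
    simp [posPart_def, mul_max_of_nonneg _ _ hl]
  rw [h, norm_smul, norm_of_nonneg hl]

lemma norm_posPart_le_norm (x : ι → ℝ) : ‖x⁺‖ ≤ ‖x‖ := by
  refine (pi_norm_le_iff_of_nonneg (norm_nonneg x)).2 fun i ↦ ?_
  rw [Pi.posPart_apply, norm_of_nonneg (posPart_nonneg _)]
  exact max_le ((le_abs_self _).trans (norm_le_pi_norm x i)) (norm_nonneg x)

/-- The soft maximum of `0` and the coordinates of `x`, a smooth approximation of the largest
positive part `‖x⁺‖`. -/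
noncomputable def softPosMax (x : ι → ℝ) : ℝ := log (1 + ∑ i, exp (x i))

/-- The gradient of `softPosMax`: the Gibbs weights `exp (x i) / (1 + ∑ j, exp (x j))`. -/
noncomputable def gibbsWeight (x : ι → ℝ) (i : ι) : ℝ := exp (x i - softPosMax x)

lemma exp_softPosMax (x : ι → ℝ) : exp (softPosMax x) = 1 + ∑ i, exp (x i) :=
  exp_log (by positivity)

lemma softPosMax_nonneg (x : ι → ℝ) : 0 ≤ softPosMax x :=
  log_nonneg (le_add_of_nonneg_right (by positivity))

lemma apply_le_softPosMax (x : ι → ℝ) (i : ι) : x i ≤ softPosMax x := by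
  rw [← exp_le_exp, exp_softPosMax]
  have := Finset.single_le_sum (fun j _ ↦ (exp_pos (x j)).le) (Finset.mem_univ i)
  linarith

lemma norm_posPart_le_softPosMax (x : ι → ℝ) : ‖x⁺‖ ≤ softPosMax x := by
  refine (pi_norm_le_iff_of_nonneg (softPosMax_nonneg x)).2 fun i ↦ ?_
  rw [Pi.posPart_apply, norm_of_nonneg (posPart_nonneg _)]
  exact max_le (apply_le_softPosMax x i) (softPosMax_nonneg x)

lemma softPosMax_le (x : ι → ℝ) : softPosMax x ≤ log (1 + Fintype.card ι) + ‖x⁺‖ := by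
  have hx (i : ι) : x i ≤ ‖x⁺‖ :=
    (le_posPart (x i)).trans ((le_abs_self _).trans (norm_le_pi_norm x⁺ i))
  rw [← exp_le_exp, exp_softPosMax, exp_add, exp_log (by positivity), add_mul, one_mul]
  refine add_le_add (one_le_exp (norm_nonneg _)) ?_
  calc ∑ i, exp (x i) ≤ ∑ _i : ι, exp ‖x⁺‖ := Finset.sum_le_sum fun i _ ↦ exp_le_exp.2 (hx i)
    _ = Fintype.card ι * exp ‖x⁺‖ := by simp

lemma gibbsWeight_nonneg (x : ι → ℝ) (i : ι) : 0 ≤ gibbsWeight x i := (exp_pos _).le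

lemma gibbsWeight_eq_div (x : ι → ℝ) (i : ι) :
    gibbsWeight x i = exp (x i) / (1 + ∑ j, exp (x j)) := by
  rw [gibbsWeight, exp_sub, exp_softPosMax]

lemma sum_gibbsWeight_le_one (x : ι → ℝ) : ∑ i, gibbsWeight x i ≤ 1 := by
  simp only [gibbsWeight_eq_div]
  rw [← Finset.sum_div, div_le_one (by positivity)]
  linarith

lemma norm_gibbsWeight_le_one (x : ι → ℝ) : ‖gibbsWeight x‖ ≤ 1 := by
  refine (pi_norm_le_iff_of_nonneg zero_le_one).2 fun i ↦ ?_
  rw [norm_of_nonneg (gibbsWeight_nonneg x i), gibbsWeight, exp_le_one_iff]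
  exact sub_nonpos.2 (apply_le_softPosMax x i)

lemma hasFDerivAt_softPosMax (x : ι → ℝ) :
    HasFDerivAt softPosMax (dotProductCLM (gibbsWeight x)) x := by
  have h := (HasFDerivAt.fun_sum (u := Finset.univ) fun i _ ↦
    (hasFDerivAt_apply (𝕜 := ℝ) i x).exp).const_add 1
  refine (h.log (by positivity)).congr_fderiv (ContinuousLinearMap.ext fun c ↦ ?_)
  simp [dotProductCLM_apply, gibbsWeight_eq_div, Finset.mul_sum, div_eq_inv_mul, mul_assoc]

lemma hasFDerivAt_gibbsWeight (x : ι → ℝ) :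
    HasFDerivAt gibbsWeight (ContinuousLinearMap.mul ℝ (ι → ℝ) (gibbsWeight x)
      - (dotProductCLM (gibbsWeight x)).smulRight (gibbsWeight x)) x := by
  refine hasFDerivAt_pi'.2 fun i ↦ ?_
  refine ((hasFDerivAt_apply (𝕜 := ℝ) i x).sub (hasFDerivAt_softPosMax x)).exp.congr_fderiv
    (ContinuousLinearMap.ext fun c ↦ ?_)
  simp only [smul_apply, sub_apply,
    ContinuousLinearMap.comp_apply, ContinuousLinearMap.proj_apply, ContinuousLinearMap.mul_apply',
    ContinuousLinearMap.smulRight_apply, Pi.sub_apply, Pi.mul_apply, Pi.smul_apply, smul_eq_mul,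
    gibbsWeight]
  ring

lemma continuous_gibbsWeight : Continuous (gibbsWeight : (ι → ℝ) → ι → ℝ) :=
  continuous_iff_continuousAt.2 fun x ↦ (hasFDerivAt_gibbsWeight x).continuousAt

/-- A smooth substitute for `x ↦ ‖x⁺‖ ^ m`. The shift by `m` makes `φ t = (m + t) ^ m` satisfy
`φ'' ≤ φ'` on `t ≥ 0`, which is what the Gaussian comparison needs. -/
noncomputable def smoothMoment (m : ℝ) (x : ι → ℝ) : ℝ := (m + softPosMax x) ^ m

/-- The gradient of `smoothMoment m`. -/
noncomputable def smoothMomentGrad (m : ℝ) (x : ι → ℝ) : ι → ℝ :=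
  (m * (m + softPosMax x) ^ (m - 1)) • gibbsWeight x

/-- The Hessian of `smoothMoment m`, as the derivative of its gradient. -/
noncomputable def smoothMomentHess (m : ℝ) (x : ι → ℝ) : (ι → ℝ) →L[ℝ] ι → ℝ :=
  (m * (m + softPosMax x) ^ (m - 1)) • ContinuousLinearMap.mul ℝ (ι → ℝ) (gibbsWeight x)
    + (m * (m - 1) * (m + softPosMax x) ^ (m - 2) - m * (m + softPosMax x) ^ (m - 1)) •
      (dotProductCLM (gibbsWeight x)).smulRight (gibbsWeight x)

variable {m : ℝ}

lemma one_le_add_softPosMax (hm : 1 ≤ m) (x : ι → ℝ) : 1 ≤ m + softPosMax x :=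
  hm.trans (le_add_of_nonneg_right (softPosMax_nonneg x))

lemma hasFDerivAt_add_softPosMax_rpow (hm : 1 ≤ m) (r : ℝ) (x : ι → ℝ) :
    HasFDerivAt (fun x ↦ (m + softPosMax x) ^ r)
      ((r * (m + softPosMax x) ^ (r - 1)) • dotProductCLM (gibbsWeight x)) x :=
  ((hasFDerivAt_softPosMax x).const_add m).rpow_const
    (.inl (zero_lt_one.trans_le (one_le_add_softPosMax hm x)).ne')

lemma continuous_add_softPosMax_rpow (hm : 1 ≤ m) (r : ℝ) :
    Continuous fun x : ι → ℝ ↦ (m + softPosMax x) ^ r :=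
  continuous_iff_continuousAt.2 fun x ↦ (hasFDerivAt_add_softPosMax_rpow hm r x).continuousAt

lemma smoothMoment_nonneg (hm : 1 ≤ m) (x : ι → ℝ) : 0 ≤ smoothMoment m x :=
  rpow_nonneg (zero_le_one.trans (one_le_add_softPosMax hm x)) m

lemma rpow_mul_norm_posPart_rpow_le_smoothMoment (hm : 1 ≤ m) {l : ℝ} (hl : 0 ≤ l) (x : ι → ℝ) :
    l ^ m * ‖x⁺‖ ^ m ≤ smoothMoment m (l • x) := by
  rw [← mul_rpow hl (norm_nonneg _), ← norm_posPart_smul hl, smoothMoment]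
  gcongr
  linarith [norm_posPart_le_softPosMax (l • x)]

lemma smoothMoment_smul_le (hm : 1 ≤ m) {l : ℝ} (hl : 0 < l) (x : ι → ℝ) :
    smoothMoment m (l • x) ≤ l ^ m * (‖x⁺‖ + (log (1 + Fintype.card ι) + m) / l) ^ m := by
  have hlog : 0 ≤ log (1 + Fintype.card ι) := log_nonneg (by simp)
  rw [← mul_rpow hl.le (by positivity), mul_add, mul_div_cancel₀ _ hl.ne',
    ← norm_posPart_smul hl.le]
  refine rpow_le_rpow (zero_le_one.trans (one_le_add_softPosMax hm _)) ?_ (by positivity)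
  linarith [softPosMax_le (l • x)]

lemma hasFDerivAt_smoothMoment (hm : 1 ≤ m) (x : ι → ℝ) :
    HasFDerivAt (smoothMoment m) (dotProductCLM (smoothMomentGrad m x)) x := by
  rw [smoothMomentGrad, map_smul]
  exact hasFDerivAt_add_softPosMax_rpow hm m x

lemma hasFDerivAt_smoothMomentGrad (hm : 1 ≤ m) (x : ι → ℝ) :
    HasFDerivAt (smoothMomentGrad m) (smoothMomentHess m x) x := by
  refine (((hasFDerivAt_add_softPosMax_rpow hm (m - 1) x).const_mul m).smul
    (hasFDerivAt_gibbsWeight x)).congr_fderiv (ContinuousLinearMap.ext fun c ↦ ?_)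
  have h : m - 1 - 1 = m - 2 := by ring
  ext i
  simp [smoothMomentHess, h]
  ring

lemma continuous_smoothMomentHess (hm : 1 ≤ m) :
    Continuous (smoothMomentHess m : (ι → ℝ) → (ι → ℝ) →L[ℝ] ι → ℝ) := by
  have := continuous_gibbsWeight (ι := ι)
  have := continuous_add_softPosMax_rpow (ι := ι) hm
  unfold smoothMomentHess
  fun_prop

lemma hasPolynomialGrowth_add_softPosMax_rpow (hm : 1 ≤ m) (r : ℝ) :
    HasPolynomialGrowth fun x : ι → ℝ ↦ (m + softPosMax x) ^ r := by
  have hlog : 0 ≤ log (1 + Fintype.card ι) := log_nonneg (by simp)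
  set K := m + log (1 + Fintype.card ι) + 1
  refine .of_norm_le (C := K ^ ⌈r⌉₊) (N := ⌈r⌉₊) fun x ↦ ?_
  have hone := one_le_add_softPosMax hm x
  have hK : m + softPosMax x ≤ K * (1 + ‖x‖) := by
    nlinarith [softPosMax_le x, norm_posPart_le_norm x, norm_nonneg x]
  rw [norm_of_nonneg (by positivity), ← mul_pow, ← rpow_natCast]
  exact (rpow_le_rpow_of_exponent_le hone (Nat.le_ceil r)).trans
    (rpow_le_rpow (by positivity) hK (by positivity))

lemma hasPolynomialGrowth_smoothMomentGrad (hm : 1 ≤ m) :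
    HasPolynomialGrowth (smoothMomentGrad m : (ι → ℝ) → ι → ℝ) :=
  ((hasPolynomialGrowth_add_softPosMax_rpow hm (m - 1)).clm_comp (m • .id ℝ ℝ)).smul
    (.of_norm_le_const norm_gibbsWeight_le_one)

lemma hasPolynomialGrowth_smoothMomentHess (hm : 1 ≤ m) :
    HasPolynomialGrowth (smoothMomentHess m : (ι → ℝ) → (ι → ℝ) →L[ℝ] ι → ℝ) := by
  have hp : HasPolynomialGrowth (gibbsWeight : (ι → ℝ) → ι → ℝ) :=
    .of_norm_le_const norm_gibbsWeight_le_one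
  have hpp : HasPolynomialGrowth fun x : ι → ℝ ↦
      (dotProductCLM (gibbsWeight x)).smulRight (gibbsWeight x) := by
    refine .of_norm_le_const (C := ‖dotProductCLM (ι := ι)‖ * 1 * 1) fun x ↦ ?_
    rw [ContinuousLinearMap.norm_smulRight_apply]
    gcongr
    exacts [dotProductCLM.le_of_opNorm_le_of_le le_rfl (norm_gibbsWeight_le_one x),
      norm_gibbsWeight_le_one x]
  have hr (c r : ℝ) : HasPolynomialGrowth fun x : ι → ℝ ↦ c * (m + softPosMax x) ^ r :=
    (hasPolynomialGrowth_add_softPosMax_rpow hm r).clm_comp (c • .id ℝ ℝ)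
  have hsub : HasPolynomialGrowth fun x : ι → ℝ ↦
      m * (m - 1) * (m + softPosMax x) ^ (m - 2) - m * (m + softPosMax x) ^ (m - 1) := by
    simpa only [sub_eq_add_neg, neg_mul] using (hr (m * (m - 1)) (m - 2)).add (hr (-m) (m - 1))
  exact ((hr m (m - 1)).smul (hp.clm_comp (.mul ℝ (ι → ℝ)))).add (hsub.smul hpp)

lemma sum_smoothMomentHess_apply_nonneg (hm : 1 ≤ m) {D : ι → ι → ℝ} (hD : ∀ i, 0 ≤ D i i)
    (hDD : ∀ i j, D i j + D j i ≤ D i i + D j j) (x : ι → ℝ) :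
    0 ≤ ∑ i, smoothMomentHess m x (D i) i := by
  set p := gibbsWeight x
  set s := m + softPosMax x
  have hs : 0 < s := zero_lt_one.trans_le (one_le_add_softPosMax hm x)
  set a := m * s ^ (m - 1) with ha
  set b := m * (m - 1) * s ^ (m - 2) with hb
  set Q := ∑ i, p i * ∑ j, p j * D i j
  set T := ∑ i, p i * D i i
  have hT : 0 ≤ T := Finset.sum_nonneg fun i _ ↦ mul_nonneg (gibbsWeight_nonneg x i) (hD i)
  have hQT : Q ≤ T := sum_mul_sum_mul_le_sum_mul_diag (gibbsWeight_nonneg x)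
    (sum_gibbsWeight_le_one x) hD hDD
  have hb0 : 0 ≤ b :=
    mul_nonneg (mul_nonneg (zero_le_one.trans hm) (sub_nonneg.2 hm)) (rpow_nonneg hs.le _)
  have hba : b ≤ a := by
    have : s ^ (m - 1) = s ^ (m - 2) * s := by
      rw [← rpow_add_one hs.ne']; ring_nf
    have h1 : m - 1 ≤ s := by linarith [softPosMax_nonneg x]
    rw [ha, hb, this, mul_assoc, mul_comm (m - 1)]
    gcongr
  calc 0 ≤ (a - b) * (T - Q) + b * T :=
        add_nonneg (mul_nonneg (sub_nonneg.2 hba) (sub_nonneg.2 hQT)) (mul_nonneg hb0 hT)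
    _ = a * T + (b - a) * Q := by ring
    _ = ∑ i, smoothMomentHess m x (D i) i := by
        simp only [smoothMomentHess, add_apply, smul_apply, ContinuousLinearMap.mul_apply',
          ContinuousLinearMap.smulRight_apply, dotProductCLM_apply, Pi.add_apply, Pi.smul_apply,
          Pi.mul_apply, smul_eq_mul, Finset.sum_add_distrib, ← Finset.mul_sum]
        simp only [T, Q, mul_comm (p _) (∑ _, _), a, b, p, s]

end SoftMax

section SudakovFernique

variable {ι Ω Ω' : Type*} [Fintype ι] [MeasurableSpace Ω] [MeasurableSpace Ω']
  {P : Measure Ω} {P' : Measure Ω'} {Z : Ω → ι → ℝ} {W : Ω' → ι → ℝ} {m : ℝ}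

lemma integral_sq_eq_secondMoment_map (hZ : HasGaussianLaw Z P) (i : ι) :
    ∫ ω, Z ω i ^ 2 ∂P = secondMoment (P.map Z) i i := by
  have := hZ.isGaussian_map
  rw [secondMoment_apply, integral_map hZ.aemeasurable (by fun_prop)]
  simp only [sq]

lemma integral_sub_sq_eq_secondMoment_map (hZ : HasGaussianLaw Z P) (i j : ι) :
    ∫ ω, (Z ω i - Z ω j) ^ 2 ∂P
      = secondMoment (P.map Z) i i + secondMoment (P.map Z) j j
        - (secondMoment (P.map Z) i j + secondMoment (P.map Z) j i) := by
  have := hZ.isGaussian_map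
  have hi (i j : ι) : Integrable (fun x ↦ x i * x j) (P.map Z) :=
    (memLp_two_apply _ i).integrable_mul (memLp_two_apply _ j)
  have hexp (x : ι → ℝ) :
      (x i - x j) ^ 2 = x i * x i + x j * x j - (x i * x j + x j * x i) := by ring
  rw [← integral_map (f := fun x ↦ (x i - x j) ^ 2) hZ.aemeasurable (by fun_prop)]
  simp only [hexp, secondMoment_apply]
  rw [integral_sub (by fun_prop) (by fun_prop), integral_add (hi i i) (hi j j),
    integral_add (hi i j) (hi j i)]

theorem integral_smoothMoment_le_integral_smoothMoment (hZ : HasGaussianLaw Z P)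
    (hW : HasGaussianLaw W P') (hZ0 : ∫ ω, Z ω ∂P = 0) (hW0 : ∫ ω, W ω ∂P' = 0)
    (hvar : ∀ i, ∫ ω, Z ω i ^ 2 ∂P ≤ ∫ ω, W ω i ^ 2 ∂P')
    (hincr : ∀ i j, ∫ ω, (Z ω i - Z ω j) ^ 2 ∂P ≤ ∫ ω, (W ω i - W ω j) ^ 2 ∂P') (hm : 1 ≤ m) :
    ∫ ω, smoothMoment m (Z ω) ∂P ≤ ∫ ω, smoothMoment m (W ω) ∂P' := by
  have := hZ.isGaussian_map
  have := hW.isGaussian_map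
  have hf : Continuous (smoothMoment m : (ι → ℝ) → ℝ) := continuous_add_softPosMax_rpow hm m
  rw [← integral_map hZ.aemeasurable (by fun_prop), ← integral_map hW.aemeasurable (by fun_prop)]
  refine integral_le_integral_of_secondMoment ?_ ?_ (hasFDerivAt_smoothMoment hm)
    (hasFDerivAt_smoothMomentGrad hm) (continuous_smoothMomentHess hm)
    (hasPolynomialGrowth_add_softPosMax_rpow hm m) (hasPolynomialGrowth_smoothMomentGrad hm)
    (hasPolynomialGrowth_smoothMomentHess hm)
    (sum_smoothMomentHess_apply_nonneg hm (fun i ↦ ?_) fun i j ↦ ?_)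
  · rwa [integral_map hZ.aemeasurable (by fun_prop)]
  · rwa [integral_map hW.aemeasurable (by fun_prop)]
  · have := hvar i
    rw [integral_sq_eq_secondMoment_map hZ, integral_sq_eq_secondMoment_map hW] at this
    exact sub_nonneg.2 this
  · have := hincr i j
    rw [integral_sub_sq_eq_secondMoment_map hZ, integral_sub_sq_eq_secondMoment_map hW] at this
    simp only [Pi.sub_apply]
    linarith

lemma integrable_add_const_rpow {α : Type*} [MeasurableSpace α] {μ : Measure α}
    [IsFiniteMeasure μ] {B : α → ℝ} (hB0 : ∀ a, 0 ≤ B a) (hm : 0 < m)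
    (hB : MemLp B (ENNReal.ofReal m) μ) {c : ℝ} (hc : 0 ≤ c) :
    Integrable (fun a ↦ (B a + c) ^ m) μ := by
  have h := (hB.add (memLp_const c)).integrable_norm_rpow (by simpa using hm)
    ENNReal.ofReal_ne_top
  simpa only [Pi.add_apply, norm_of_nonneg (add_nonneg (hB0 _) hc),
    ENNReal.toReal_ofReal hm.le] using h

lemma tendsto_integral_add_div_rpow {α : Type*} [MeasurableSpace α] {μ : Measure α}
    [IsFiniteMeasure μ] {B : α → ℝ} (hB0 : ∀ a, 0 ≤ B a) (hm : 0 < m)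
    (hB : MemLp B (ENNReal.ofReal m) μ) {c : ℝ} (hc : 0 ≤ c) :
    Filter.Tendsto (fun n : ℕ ↦ ∫ a, (B a + c / (n + 1)) ^ m ∂μ) Filter.atTop
      (nhds (∫ a, B a ^ m ∂μ)) := by
  have hintegrable {c : ℝ} (hc : 0 ≤ c) := integrable_add_const_rpow hB0 hm hB hc
  refine tendsto_integral_of_dominated_convergence (fun a ↦ (B a + c) ^ m)
    (fun n ↦ (hintegrable (by positivity)).aestronglyMeasurable) (hintegrable hc)
    (fun n ↦ ae_of_all _ fun a ↦ ?_) (ae_of_all _ fun a ↦ ?_)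
  · have := hB0 a
    rw [norm_of_nonneg (by positivity)]
    gcongr
    exact div_le_self hc (by simp)
  · have h := (tendsto_one_div_add_atTop_nhds_zero_nat (𝕜 := ℝ)).const_mul c |>.const_add (B a)
    simp only [mul_one_div, mul_zero, add_zero] at h
    exact h.rpow_const (.inr hm.le)

lemma integrable_smoothMoment (hZ : HasGaussianLaw Z P) (hm : 1 ≤ m) :
    Integrable (fun ω ↦ smoothMoment m (Z ω)) P := by
  have := hZ.isGaussian_map
  exact ((hasPolynomialGrowth_add_softPosMax_rpow hm m).integrable
    (continuous_add_softPosMax_rpow hm m).aestronglyMeasurable).comp_aemeasurable hZ.aemeasurable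

lemma memLp_norm_posPart (hW : HasGaussianLaw W P') {p : ENNReal} (hp : p ≠ ⊤) :
    MemLp (fun ω ↦ ‖(W ω)⁺‖) p P' := by
  have hc : Continuous fun x : ι → ℝ ↦ ‖x⁺‖ :=
    (continuous_pi fun i ↦ (continuous_apply i).sup continuous_const).norm
  refine (hW.memLp hp).of_le
    (hc.measurable.comp_aemeasurable hW.aemeasurable).aestronglyMeasurable (ae_of_all _ fun ω ↦ ?_)
  rw [norm_norm]
  exact norm_posPart_le_norm (W ω)

lemma integral_norm_posPart_rpow_le_integral_add_div_rpow (hZ : HasGaussianLaw Z P)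
    (hW : HasGaussianLaw W P') (hZ0 : ∫ ω, Z ω ∂P = 0) (hW0 : ∫ ω, W ω ∂P' = 0)
    (hvar : ∀ i, ∫ ω, Z ω i ^ 2 ∂P ≤ ∫ ω, W ω i ^ 2 ∂P')
    (hincr : ∀ i j, ∫ ω, (Z ω i - Z ω j) ^ 2 ∂P ≤ ∫ ω, (W ω i - W ω j) ^ 2 ∂P') (hm : 1 ≤ m)
    {l : ℝ} (hl : 0 < l) :
    ∫ ω, ‖(Z ω)⁺‖ ^ m ∂P
      ≤ ∫ ω, (‖(W ω)⁺‖ + (log (1 + Fintype.card ι) + m) / l) ^ m ∂P' := by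
  have hm0 : 0 < m := zero_lt_one.trans_le hm
  have := hW.isProbabilityMeasure
  have hlog : 0 ≤ log (1 + Fintype.card ι) := log_nonneg (by simp)
  have hcomp : ∫ ω, smoothMoment m (l • Z ω) ∂P ≤ ∫ ω, smoothMoment m (l • W ω) ∂P' := by
    refine integral_smoothMoment_le_integral_smoothMoment (hZ.fun_smul l) (hW.fun_smul l)
      (by rw [integral_smul, hZ0, smul_zero]) (by rw [integral_smul, hW0, smul_zero])
      (fun i ↦ ?_) (fun i j ↦ ?_) hm
    · simp only [Pi.smul_apply, smul_eq_mul, mul_pow, integral_const_mul]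
      gcongr
      exact hvar i
    · simp only [Pi.smul_apply, smul_eq_mul, ← mul_sub, mul_pow, integral_const_mul]
      gcongr
      exact hincr i j
  refine le_of_mul_le_mul_left ?_ (rpow_pos_of_pos hl m)
  simp only [← integral_const_mul]
  calc ∫ ω, l ^ m * ‖(Z ω)⁺‖ ^ m ∂P ≤ ∫ ω, smoothMoment m (l • Z ω) ∂P :=
        integral_mono_of_nonneg (ae_of_all _ fun ω ↦ by positivity)
          (integrable_smoothMoment (hZ.fun_smul l) hm)
          (ae_of_all _ fun ω ↦ rpow_mul_norm_posPart_rpow_le_smoothMoment hm hl.le (Z ω))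
    _ ≤ ∫ ω, smoothMoment m (l • W ω) ∂P' := hcomp
    _ ≤ ∫ ω, l ^ m * (‖(W ω)⁺‖ + (log (1 + Fintype.card ι) + m) / l) ^ m ∂P' :=
        integral_mono_of_nonneg (ae_of_all _ fun ω ↦ smoothMoment_nonneg hm _)
          ((integrable_add_const_rpow (fun ω ↦ norm_nonneg (W ω)⁺) hm0
            (memLp_norm_posPart hW ENNReal.ofReal_ne_top) (by positivity)).const_mul _)
          (ae_of_all _ fun ω ↦ smoothMoment_smul_le hm hl (W ω))

theorem integral_norm_posPart_rpow_le_integral_norm_posPart_rpow (hZ : HasGaussianLaw Z P)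
    (hW : HasGaussianLaw W P') (hZ0 : ∫ ω, Z ω ∂P = 0) (hW0 : ∫ ω, W ω ∂P' = 0)
    (hvar : ∀ i, ∫ ω, Z ω i ^ 2 ∂P ≤ ∫ ω, W ω i ^ 2 ∂P')
    (hincr : ∀ i j, ∫ ω, (Z ω i - Z ω j) ^ 2 ∂P ≤ ∫ ω, (W ω i - W ω j) ^ 2 ∂P') (hm : 1 ≤ m) :
    ∫ ω, ‖(Z ω)⁺‖ ^ m ∂P ≤ ∫ ω, ‖(W ω)⁺‖ ^ m ∂P' := by
  have := hW.isProbabilityMeasure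
  have hm0 : 0 < m := zero_lt_one.trans_le hm
  have hlim := tendsto_integral_add_div_rpow (fun ω ↦ norm_nonneg (W ω)⁺) hm0
    (memLp_norm_posPart hW ENNReal.ofReal_ne_top)
    (c := log (1 + Fintype.card ι) + m) (add_nonneg (log_nonneg (by simp)) hm0.le)
  exact ge_of_tendsto' hlim fun n ↦ integral_norm_posPart_rpow_le_integral_add_div_rpow
    hZ hW hZ0 hW0 hvar hincr hm (by positivity)

end SudakovFernique

section AbsoluteMoments

variable {ι : Type*}

/-- The map `x ↦ (x, -x)`, which turns `max |x i|` into a maximum without absolute values. -/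
noncomputable def signedDouble : (ι → ℝ) →L[ℝ] (ι ⊕ ι → ℝ) :=
  .pi (Sum.elim (fun i ↦ .proj i) fun i ↦ -.proj i)

@[simp]
lemma signedDouble_apply_inl (x : ι → ℝ) (i : ι) : signedDouble x (.inl i) = x i := rfl

@[simp]
lemma signedDouble_apply_inr (x : ι → ℝ) (i : ι) : signedDouble x (.inr i) = -x i := rfl

variable [Fintype ι] {Ω Ω' : Type*} [MeasurableSpace Ω] [MeasurableSpace Ω']
  {P : Measure Ω} {P' : Measure Ω'} {m : ℝ}

lemma norm_posPart_signedDouble (x : ι → ℝ) : ‖(signedDouble x)⁺‖ = ‖x‖ := by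
  apply le_antisymm
  · refine (norm_posPart_le_norm _).trans ((pi_norm_le_iff_of_nonneg (norm_nonneg x)).2 ?_)
    rintro (i | i)
    · simpa using norm_le_pi_norm x i
    · simpa using norm_le_pi_norm x i
  · refine (pi_norm_le_iff_of_nonneg (norm_nonneg _)).2 fun i ↦ abs_le'.2 ⟨?_, ?_⟩
    · exact ((le_posPart _).trans (le_abs_self _)).trans
        (norm_le_pi_norm (signedDouble x)⁺ (.inl i))
    · exact ((le_posPart _).trans (le_abs_self _)).trans
        (norm_le_pi_norm (signedDouble x)⁺ (.inr i))

theorem integral_norm_rpow_le_integral_norm_rpow {X : Ω → ι → ℝ} {W : Ω' → ι → ℝ}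
    (hX : HasGaussianLaw X P) (hW : HasGaussianLaw W P') (hX0 : ∫ ω, X ω ∂P = 0)
    (hW0 : ∫ ω, W ω ∂P' = 0)
    (hsub : ∀ i j, ∫ ω, (X ω i - X ω j) ^ 2 ∂P ≤ ∫ ω, (W ω i - W ω j) ^ 2 ∂P')
    (hadd : ∀ i j, ∫ ω, (X ω i + X ω j) ^ 2 ∂P ≤ ∫ ω, (W ω i + W ω j) ^ 2 ∂P') (hm : 1 ≤ m) :
    ∫ ω, ‖X ω‖ ^ m ∂P ≤ ∫ ω, ‖W ω‖ ^ m ∂P' := by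
  have hvar (i : ι) : ∫ ω, X ω i ^ 2 ∂P ≤ ∫ ω, W ω i ^ 2 ∂P' := by
    have h := hadd i i
    simp only [← two_mul, mul_pow, integral_const_mul] at h
    exact le_of_mul_le_mul_left h (by positivity)
  have hneg (a b : ℝ) : (-a - b) ^ 2 = (a + b) ^ 2 := by ring
  have hneg_add (a b : ℝ) : (-a + b) ^ 2 = (a - b) ^ 2 := by ring
  have h := integral_norm_posPart_rpow_le_integral_norm_posPart_rpow
    (hX.map_fun signedDouble) (hW.map_fun signedDouble)
    (by rw [signedDouble.integral_comp_comm hX.integrable, hX0, map_zero])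
    (by rw [signedDouble.integral_comp_comm hW.integrable, hW0, map_zero]) ?_ ?_ hm
  · simpa only [norm_posPart_signedDouble] using h
  · rintro (i | i) <;> simpa using hvar i
  · rintro (i | i) (j | j) <;> simp [hneg, hneg_add, hsub, hadd]

lemma hasGaussianLaw_comp {E : Type*} [NormedAddCommGroup E] [NormedSpace ℝ E]
    [MeasurableSpace E] {X : Ω → E} {f : Ω' → Ω}
    (hX : HasGaussianLaw X P) (hf : MeasurePreserving f P' P) :
    HasGaussianLaw (fun ω ↦ X (f ω)) P' where
  isGaussian_map := by
    have hXf : AEMeasurable X (P'.map f) := hf.map_eq ▸ hX.aemeasurable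
    have := hX.isGaussian_map
    rwa [← Function.comp_def, ← AEMeasurable.map_map_of_aemeasurable hXf hf.aemeasurable, hf.map_eq]

lemma hasGaussianLaw_fst_add_snd {E : Type*} [NormedAddCommGroup E] [NormedSpace ℝ E]
    [CompleteSpace E] [SecondCountableTopology E] [MeasurableSpace E] [BorelSpace E]
    {X : Ω → E} {V : Ω' → E} (hX : HasGaussianLaw X P) (hV : HasGaussianLaw V P') :
    HasGaussianLaw (fun ω ↦ X ω.1 + V ω.2) (P.prod P') := by
  have := hX.isProbabilityMeasure
  have := hV.isProbabilityMeasure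
  exact (IndepFun.hasGaussianLaw (hasGaussianLaw_comp hX measurePreserving_fst)
    (hasGaussianLaw_comp hV measurePreserving_snd)
    (indepFun_prod₀ hX.aemeasurable hV.aemeasurable)).fun_add

lemma integral_sq_gaussianReal (v : ℝ≥0) : ∫ x, x ^ 2 ∂gaussianReal 0 v = v := by
  rw [← variance_of_integral_eq_zero (by fun_prop) integral_id_gaussianReal,
    variance_fun_id_gaussianReal]

lemma add_rpow_le_two_rpow_mul {a b : ℝ} (ha : 0 ≤ a) (hb : 0 ≤ b) (hm : 1 ≤ m) :
    (a + b) ^ m ≤ 2 ^ (m - 1) * (a ^ m + b ^ m) := by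
  lift a to ℝ≥0 using ha
  lift b to ℝ≥0 using hb
  exact_mod_cast NNReal.rpow_add_le_mul_rpow_add_rpow a b hm

lemma integral_add_sq_le_four_mul {f g : Ω → ℝ} (hf : MemLp f 2 P) (hg : MemLp g 2 P) {c : ℝ}
    (hfc : ∫ ω, f ω ^ 2 ∂P ≤ c) (hgc : ∫ ω, g ω ^ 2 ∂P ≤ c) :
    ∫ ω, (f ω + g ω) ^ 2 ∂P ≤ 4 * c := by
  calc ∫ ω, (f ω + g ω) ^ 2 ∂P ≤ ∫ ω, 2 * (f ω ^ 2 + g ω ^ 2) ∂P :=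
        integral_mono (hf.add hg).integrable_sq
          ((hf.integrable_sq.add hg.integrable_sq).const_mul 2) fun ω ↦ add_sq_le
    _ = 2 * (∫ ω, f ω ^ 2 ∂P + ∫ ω, g ω ^ 2 ∂P) := by
        rw [integral_const_mul, integral_add hf.integrable_sq hg.integrable_sq]
    _ ≤ 4 * c := by linarith

lemma integral_add_mul_sq_prod_gaussianReal [IsProbabilityMeasure P] {f : Ω → ℝ}
    (hf : MemLp f 2 P) (hf0 : ∫ ω, f ω ∂P = 0) (a : ℝ) (v : ℝ≥0) :
    ∫ p, (f p.1 + a * p.2) ^ 2 ∂P.prod (gaussianReal 0 v)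
      = ∫ ω, f ω ^ 2 ∂P + a ^ 2 * v := by
  have hg : MemLp (fun t ↦ a * t) 2 (gaussianReal 0 v) :=
    (IsGaussian.memLp_two_id (μ := gaussianReal 0 v)).const_mul a
  have h := integral_prod_add_mul_add hf hf hg hg hf0 hf0
  simpa only [← sq, mul_pow, integral_const_mul, integral_sq_gaussianReal] using h

lemma integral_norm_rpow_le_integral_norm_add_smul_one_rpow {X : Ω → ι → ℝ} {Y : Ω' → ι → ℝ}
    (hX : HasGaussianLaw X P) (hY : HasGaussianLaw Y P') (hX0 : ∫ ω, X ω ∂P = 0)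
    (hY0 : ∫ ω, Y ω ∂P' = 0)
    (hincr : ∀ i j, ∫ ω, (X ω i - X ω j) ^ 2 ∂P ≤ ∫ ω, (Y ω i - Y ω j) ^ 2 ∂P') {σ : ℝ}
    (hσ : ∀ i, ∫ ω, X ω i ^ 2 ∂P ≤ σ ^ 2) (hm : 1 ≤ m) :
    ∫ ω, ‖X ω‖ ^ m ∂P
      ≤ ∫ p, ‖Y p.1 + (σ * p.2) • (1 : ι → ℝ)‖ ^ m ∂P'.prod (gaussianReal 0 1) := by
  have := hY.isProbabilityMeasure
  have hg : HasGaussianLaw (fun t : ℝ ↦ (σ * t) • (1 : ι → ℝ)) (gaussianReal 0 1) :=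
    (IsGaussian.hasGaussianLaw_id.fun_smul σ).map_fun (.toSpanSingleton ℝ (1 : ι → ℝ))
  have hg0 : ∫ t, (σ * t) • (1 : ι → ℝ) ∂gaussianReal 0 1 = 0 := by
    rw [integral_smul_const, integral_const_mul, integral_id_gaussianReal, mul_zero, zero_smul]
  refine integral_norm_rpow_le_integral_norm_rpow hX (hasGaussianLaw_fst_add_snd hY hg) hX0 ?_
    (fun i j ↦ ?_) (fun i j ↦ ?_) hm
  · rw [integral_add (hY.integrable.comp_fst _) (hg.integrable.comp_snd _), integral_fun_fst Y,
      integral_fun_snd (fun t : ℝ ↦ (σ * t) • (1 : ι → ℝ)), hY0, hg0, smul_zero, smul_zero,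
      add_zero]
  · simpa [integral_fun_fst fun ω ↦ (Y ω i - Y ω j) ^ 2] using hincr i j
  · have hYij0 : ∫ ω, Y ω i + Y ω j ∂P' = 0 := by
      rw [integral_add (hY.integrable.eval i) (hY.integrable.eval j),
        ← eval_integral (fun i ↦ hY.integrable.eval i) i,
        ← eval_integral (fun i ↦ hY.integrable.eval i) j, hY0, Pi.zero_apply, Pi.zero_apply,
        add_zero]
    have hYij : MemLp (fun ω ↦ Y ω i + Y ω j) 2 P' :=
      (hY.eval i).memLp_two.add (hY.eval j).memLp_two
    have hWij (p : Ω' × ℝ) : (Y p.1 + (σ * p.2) • (1 : ι → ℝ)) i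
        + (Y p.1 + (σ * p.2) • (1 : ι → ℝ)) j = Y p.1 i + Y p.1 j + 2 * σ * p.2 := by
      simp only [Pi.add_apply, Pi.smul_apply, Pi.one_apply, smul_eq_mul]
      ring
    simp only [hWij]
    rw [integral_add_mul_sq_prod_gaussianReal hYij hYij0]
    calc ∫ ω, (X ω i + X ω j) ^ 2 ∂P ≤ 4 * σ ^ 2 :=
          integral_add_sq_le_four_mul (hX.eval i).memLp_two (hX.eval j).memLp_two (hσ i) (hσ j)
      _ = (2 * σ) ^ 2 * (1 : ℝ≥0) := by push_cast; ring
      _ ≤ ∫ ω, (Y ω i + Y ω j) ^ 2 ∂P' + (2 * σ) ^ 2 * (1 : ℝ≥0) :=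
          le_add_of_nonneg_left (integral_nonneg fun ω ↦ sq_nonneg _)

lemma norm_add_smul_one_rpow_le {σ : ℝ} (hσ : 0 ≤ σ) (hm : 1 ≤ m) (y : ι → ℝ) (t : ℝ) :
    ‖y + (σ * t) • (1 : ι → ℝ)‖ ^ m ≤ 2 ^ (m - 1) * (σ ^ m * |t| ^ m + ‖y‖ ^ m) := by
  have hone : ‖(1 : ι → ℝ)‖ ≤ 1 := (pi_norm_le_iff_of_nonneg zero_le_one).2 fun i ↦ by simp
  have hsmul : ‖(σ * t) • (1 : ι → ℝ)‖ ≤ σ * |t| := by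
    rw [norm_smul, norm_mul, norm_of_nonneg hσ]
    exact mul_le_of_le_one_right (by positivity) hone
  calc ‖y + (σ * t) • (1 : ι → ℝ)‖ ^ m ≤ (σ * |t| + ‖y‖) ^ m := by
        rw [add_comm (σ * |t|)]
        gcongr
        exact norm_add_le_of_le le_rfl hsmul
    _ ≤ 2 ^ (m - 1) * ((σ * |t|) ^ m + ‖y‖ ^ m) :=
        add_rpow_le_two_rpow_mul (by positivity) (norm_nonneg _) hm
    _ = 2 ^ (m - 1) * (σ ^ m * |t| ^ m + ‖y‖ ^ m) := by rw [mul_rpow hσ (abs_nonneg _)]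

lemma integrable_norm_rpow {E : Type*} [NormedAddCommGroup E] [NormedSpace ℝ E] [CompleteSpace E]
    [SecondCountableTopology E] [MeasurableSpace E] [BorelSpace E] {V : Ω → E}
    (hV : HasGaussianLaw V P) (hm : 0 < m) : Integrable (fun ω ↦ ‖V ω‖ ^ m) P := by
  have h := (hV.memLp (p := ENNReal.ofReal m) ENNReal.ofReal_ne_top).integrable_norm_rpow
    (by simpa using hm) ENNReal.ofReal_ne_top
  rwa [ENNReal.toReal_ofReal hm.le] at h

theorem moment_comparison_increments_general {X : Ω → ι → ℝ} {Y : Ω' → ι → ℝ}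
    (hX : HasGaussianLaw X P) (hY : HasGaussianLaw Y P') (hX0 : ∫ ω, X ω ∂P = 0)
    (hY0 : ∫ ω, Y ω ∂P' = 0)
    (hincr : ∀ i j, ∫ ω, (X ω i - X ω j) ^ 2 ∂P ≤ ∫ ω, (Y ω i - Y ω j) ^ 2 ∂P') {σ : ℝ}
    (hσ0 : 0 ≤ σ) (hσ : ∀ i, ∫ ω, X ω i ^ 2 ∂P ≤ σ ^ 2) (hm : 1 ≤ m) :
    ∫ ω, ‖X ω‖ ^ m ∂P
      ≤ 2 ^ (m - 1) * (σ ^ m * ∫ x, |x| ^ m ∂gaussianReal 0 1 + ∫ ω, ‖Y ω‖ ^ m ∂P') := by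
  have := hY.isProbabilityMeasure
  have hm0 : 0 < m := zero_lt_one.trans_le hm
  have hYm := integrable_norm_rpow hY hm0
  have hgm : Integrable (fun x : ℝ ↦ |x| ^ m) (gaussianReal 0 1) :=
    integrable_norm_rpow IsGaussian.hasGaussianLaw_id hm0
  calc ∫ ω, ‖X ω‖ ^ m ∂P
      ≤ ∫ p, ‖Y p.1 + (σ * p.2) • (1 : ι → ℝ)‖ ^ m ∂P'.prod (gaussianReal 0 1) :=
        integral_norm_rpow_le_integral_norm_add_smul_one_rpow hX hY hX0 hY0 hincr hσ hm
    _ ≤ ∫ p, 2 ^ (m - 1) * (σ ^ m * |p.2| ^ m + ‖Y p.1‖ ^ m) ∂P'.prod (gaussianReal 0 1) :=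
        integral_mono_of_nonneg (ae_of_all _ fun p ↦ by positivity)
          ((((hgm.comp_snd P').const_mul _).add (hYm.comp_fst _)).const_mul _)
          (ae_of_all _ fun p ↦ norm_add_smul_one_rpow_le hσ0 hm (Y p.1) p.2)
    _ = _ := by
        rw [integral_const_mul, integral_add ((hgm.comp_snd P').const_mul _) (hYm.comp_fst _),
          integral_const_mul, integral_fun_snd (fun x ↦ |x| ^ m),
          integral_fun_fst (fun ω ↦ ‖Y ω‖ ^ m), probReal_univ, probReal_univ, one_smul, one_smul]

end AbsoluteMoments

section CenteredGaussianVec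

lemma iSup_abs_eq_norm {ι : Type*} [Fintype ι] (x : ι → ℝ) : ⨆ i, |x i| = ‖x‖ :=
  le_antisymm (Real.iSup_le (norm_le_pi_norm x) (norm_nonneg x))
    ((pi_norm_le_iff_of_nonneg (Real.iSup_nonneg fun i ↦ abs_nonneg (x i))).2
      (le_ciSup (f := fun i ↦ |x i|) (Set.finite_range _).bddAbove))

lemma le_sq_iSup_sqrt {ι : Type*} [Finite ι] (a : ι → ℝ) (i : ι) : a i ≤ (⨆ j, √(a j)) ^ 2 :=
  (Real.sqrt_le_left (Real.iSup_nonneg fun j ↦ sqrt_nonneg (a j))).1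
    (le_ciSup (f := fun j ↦ √(a j)) (Set.finite_range _).bddAbove i)

namespace IsCenteredGaussianVec

variable {Ω : Type*} [MeasurableSpace Ω] {k : ℕ} {P : Measure Ω} {X : Ω → Fin k → ℝ}

lemma hasGaussianLaw (hX : IsCenteredGaussianVec P X) (hXm : Measurable X) :
    HasGaussianLaw X P where
  isGaussian_map := by
    refine isGaussian_of_map_eq_gaussianReal fun L ↦
      ⟨0, (Var[fun ω ↦ ∑ i, L (Pi.single i 1) * X ω i; P]).toNNReal, ?_⟩
    have hL (ω : Ω) : L (X ω) = ∑ i, L (Pi.single i 1) * X ω i := by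
      conv_lhs => rw [pi_eq_sum_univ' (X ω)]
      simp [mul_comm]
    rw [← hX, Measure.map_map (by fun_prop) hXm]
    simp only [Function.comp_def, hL]

lemma integral_eq_zero (hX : IsCenteredGaussianVec P X) (hXm : Measurable X) :
    ∫ ω, X ω ∂P = 0 := by
  have hXi := (hX.hasGaussianLaw hXm).integrable
  ext i
  have h := hX (Pi.single i 1)
  simp only [Pi.single_apply, ite_mul, one_mul, zero_mul, Finset.sum_ite_eq', Finset.mem_univ,
    if_true] at h
  rw [eval_integral fun i ↦ hXi.eval i,
    ← integral_map (f := fun x ↦ x) (by fun_prop) (by fun_prop), h,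
    integral_id_gaussianReal, Pi.zero_apply]

end IsCenteredGaussianVec

end CenteredGaussianVec

/-- **Corollary.** If `X, Y` are centered Gaussian vectors in `ℝ^k` with
`E[(X_i - X_j)^2] ≤ E[(Y_i - Y_j)^2]` for all `i, j`, then for every `m ≥ 1`,
`E[(max_i |X_i|)^m] ≤ 2^(m-1) (σ^m E|g|^m + E[(max_i |Y_i|)^m])`, where
`σ = max_i sqrt(E[X_i^2] + E[Y_i^2])` and `g` is a standard normal variable. -/
theorem moment_comparison_increments
    {Ω : Type*} [MeasurableSpace Ω] {k : ℕ} (P : Measure Ω) [IsProbabilityMeasure P]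
    (X Y : Ω → Fin k → ℝ) (hXmeas : Measurable X) (hYmeas : Measurable Y)
    (hX : IsCenteredGaussianVec P X) (hY : IsCenteredGaussianVec P Y)
    (hincr : ∀ i j, ∫ ω, (X ω i - X ω j) ^ 2 ∂P ≤ ∫ ω, (Y ω i - Y ω j) ^ 2 ∂P)
    (σ : ℝ) (hσ : σ = ⨆ i, Real.sqrt ((∫ ω, (X ω i) ^ 2 ∂P) + ∫ ω, (Y ω i) ^ 2 ∂P))
    (m : ℝ) (hm : 1 ≤ m) :
    ∫ ω, (⨆ i, |X ω i|) ^ m ∂P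
      ≤ 2 ^ (m - 1) * (σ ^ m * (∫ x, |x| ^ m ∂(gaussianReal 0 1))
          + ∫ ω, (⨆ i, |Y ω i|) ^ m ∂P) := by
  have hσX (i : Fin k) : ∫ ω, X ω i ^ 2 ∂P ≤ σ ^ 2 := by
    have h := le_sq_iSup_sqrt (fun i ↦ (∫ ω, X ω i ^ 2 ∂P) + ∫ ω, Y ω i ^ 2 ∂P) i
    rw [← hσ] at h
    exact (le_add_of_nonneg_right (integral_nonneg fun ω ↦ sq_nonneg _)).trans h
  simp only [iSup_abs_eq_norm]
  exact moment_comparison_increments_general (hX.hasGaussianLaw hXmeas) (hY.hasGaussianLaw hYmeas)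
    (hX.integral_eq_zero hXmeas) (hY.integral_eq_zero hYmeas) hincr
    (hσ ▸ Real.iSup_nonneg fun i ↦ sqrt_nonneg _) hσX hm
end

section
/- Let g ~ N(0, I_n) be a standard Gaussian vector in R^n, and let X_1 = M_1 g, Y_1 = M_2 g for deterministic nonzero row vectors M_1, M_2 ∈ R^{1×n} such that |Corr(X_1, Y_1)| < 1. Then for every m > 0 there exists a constant C(m) > 0 (depending only on m) such that for all real p > 1: E[(max(|X_1|, |Y_1|))^{m−2} · (min(|X_1|, |Y_1|)/max(|X_1|, |Y_1|))^{p−2} · (1 − min(|X_1|, |Y_1|)/max(|X_1|, |Y_1|))] ≤ C(m, X_1, Y_1)/(p(p−1)), where C(m, X_1, Y_1) = C(m) · (max(Var(X_1), Var(Y_1)))^{m/2} / sqrt(Var(X_1) · Var(Y_1) · (1 − Corr(X_1, Y_1)^2)). -/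
open MeasureTheory ProbabilityTheory Real
open scoped NNReal BigOperators

/-- The covariance `Cov(f, g) = E[f g] - E[f] E[g]` of two real random variables. -/
noncomputable def covar {Ω : Type*} [MeasurableSpace Ω] (P : Measure Ω)
    (f g : Ω → ℝ) : ℝ :=
  (∫ ω, f ω * g ω ∂P) - (∫ ω, f ω ∂P) * ∫ ω, g ω ∂P

/-- The Pearson correlation `Corr(f, g) = Cov(f, g) / sqrt(Var f · Var g)`. -/
noncomputable def corr {Ω : Type*} [MeasurableSpace Ω] (P : Measure Ω)
    (f g : Ω → ℝ) : ℝ :=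
  covar P f g / Real.sqrt (variance f P * variance g P)

/-- The law of a standard Gaussian vector `g ~ N(0, I_n)` in `ℝ^n`. -/
noncomputable def stdGaussianPi (n : ℕ) : Measure (Fin n → ℝ) :=
  Measure.pi fun _ => gaussianReal 0 1

/-- The linear form `x ↦ M x = ∑ i, M i * x i` given by a row vector `M ∈ ℝ^{1×n}`. -/
def linForm {n : ℕ} (M : Fin n → ℝ) : (Fin n → ℝ) → ℝ :=
  fun x => ∑ i, M i * x i

/-!
The density of the centred Gaussian pair `(X, Y)` is at most a constant times the density of `X`,
uniformly in `y`. On the event `|Y| ≤ |X|` one may therefore integrate over `y` first: substituting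
`y = x t` turns the fibre integral into `2 |x| ^ (m - 1)` times the Beta integral
`B (p - 1, 2) = 1 / (p (p - 1))`, and integrating over `x` leaves an absolute moment of order
`m - 1 > -1` of a Gaussian variable. The event `|X| ≤ |Y|` is symmetric.
-/

open scoped ENNReal

section Integrals

lemma lintegral_comp_abs {μ : Measure ℝ} [μ.IsNegInvariant] [NullSingletonClass μ] (f : ℝ → ℝ≥0∞) :
    ∫⁻ x, f |x| ∂μ = 2 * ∫⁻ x in Set.Ioi 0, f x ∂μ := by
  have hpos : ∫⁻ x in Set.Ioi 0, f |x| ∂μ = ∫⁻ x in Set.Ioi 0, f x ∂μ :=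
    setLIntegral_congr_fun measurableSet_Ioi fun x hx ↦ congrArg f (abs_of_pos hx)
  have hneg : ∫⁻ x in Set.Iio 0, f |x| ∂μ = ∫⁻ x in Set.Ioi 0, f |x| ∂μ := by
    simpa using (Measure.measurePreserving_neg μ).setLIntegral_comp_preimage_emb
      (MeasurableEquiv.neg ℝ).measurableEmbedding (fun x ↦ f |x|) (Set.Ioi 0)
  rw [← lintegral_add_compl _ (measurableSet_Ioi (a := (0 : ℝ))), Set.compl_Ioi,
    setLIntegral_congr Iio_ae_eq_Iic.symm, hneg, hpos, two_mul]

lemma setLIntegral_abs_le_comp_abs {μ : Measure ℝ} [μ.IsNegInvariant] [NullSingletonClass μ]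
    (f : ℝ → ℝ≥0∞) (r : ℝ) :
    ∫⁻ y in {y | |y| ≤ r}, f |y| ∂μ = 2 * ∫⁻ y in Set.Ioo 0 r, f y ∂μ := by
  have hset : MeasurableSet {y : ℝ | |y| ≤ r} := measurableSet_le (by fun_prop) (by fun_prop)
  rw [setLIntegral_congr Ioo_ae_eq_Ioc, ← Set.Iic_inter_Ioi, ← setLIntegral_indicator
    measurableSet_Iic, ← lintegral_comp_abs, ← lintegral_indicator hset]
  rfl

lemma setLIntegral_Ioo_comp_div (f : ℝ → ℝ≥0∞) {r : ℝ} (hr : 0 < r) :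
    ∫⁻ y in Set.Ioo 0 r, f (y / r) = ENNReal.ofReal r * ∫⁻ t in Set.Ioo 0 1, f t := by
  have himage : (r * ·) '' Set.Ioo 0 1 = Set.Ioo 0 r := by
    rw [Set.image_mul_left_Ioo hr, mul_zero, mul_one]
  rw [← himage, lintegral_image_eq_lintegral_abs_deriv_mul measurableSet_Ioo
    (fun t _ ↦ (hasDerivAt_const_mul r).hasDerivWithinAt) (mul_right_injective₀ hr.ne').injOn,
    lintegral_const_mul' _ _ ENNReal.ofReal_ne_top, abs_of_pos hr]
  simp only [mul_div_cancel_left₀ _ hr.ne']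

lemma setLIntegral_rpow_mul_one_sub_rpow {α β : ℝ} (hα : 0 < α) (hβ : 0 < β) :
    ∫⁻ t in Set.Ioo (0 : ℝ) 1, ENNReal.ofReal (t ^ (α - 1) * (1 - t) ^ (β - 1)) =
      ENNReal.ofReal (beta α β) := by
  have hbeta := beta_pos hα hβ
  calc ∫⁻ t in Set.Ioo (0 : ℝ) 1, ENNReal.ofReal (t ^ (α - 1) * (1 - t) ^ (β - 1))
      = ∫⁻ t in Set.Ioo (0 : ℝ) 1, ENNReal.ofReal (beta α β) *
          ENNReal.ofReal (1 / beta α β * t ^ (α - 1) * (1 - t) ^ (β - 1)) := by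
        refine lintegral_congr fun t ↦ ?_
        rw [← ENNReal.ofReal_mul hbeta.le, mul_assoc, ← mul_assoc,
          mul_one_div_cancel hbeta.ne', one_mul]
    _ = ENNReal.ofReal (beta α β) := by
        rw [lintegral_const_mul' _ _ ENNReal.ofReal_ne_top, ← lintegral_betaPDF,
          lintegral_betaPDF_eq_one hα hβ, mul_one]

lemma beta_two_right {α : ℝ} (hα : 0 < α) : beta α 2 = 1 / ((α + 1) * α) := by
  have := Gamma_pos_of_pos hα
  rw [beta, Gamma_two, show α + 2 = α + 1 + 1 by ring, Gamma_add_one (by positivity),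
    Gamma_add_one hα.ne']
  field_simp

end Integrals

section GaussianReal

lemma gaussianReal_le_smul_volume (μ : ℝ) {v : ℝ≥0} (hv : v ≠ 0) :
    gaussianReal μ v ≤ ENNReal.ofReal (√(2 * π * v))⁻¹ • volume := by
  rw [gaussianReal_of_var_ne_zero μ hv, ← withDensity_const]
  refine withDensity_mono (.of_forall fun x ↦ ENNReal.ofReal_le_ofReal ?_)
  refine mul_le_of_le_one_right (by positivity) (exp_le_one_iff.2 ?_)
  exact div_nonpos_of_nonpos_of_nonneg (neg_nonpos.2 (sq_nonneg _)) (by positivity)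

lemma setLIntegral_Ioi_rpow_mul_exp_neg_mul_sq {s b : ℝ} (hs : -1 < s) (hb : 0 < b) :
    ∫⁻ x in Set.Ioi (0 : ℝ), ENNReal.ofReal (x ^ s * rexp (-b * x ^ 2)) =
      ENNReal.ofReal (b ^ (-(s + 1) / 2) * (1 / 2) * Gamma ((s + 1) / 2)) := by
  have h := integral_rpow_mul_exp_neg_mul_rpow two_pos hs hb
  simp only [rpow_two] at h
  rw [← h, ofReal_integral_eq_lintegral_ofReal
    (integrableOn_rpow_mul_exp_neg_mul_sq hb hs)]
  filter_upwards [ae_restrict_mem measurableSet_Ioi] with x (hx : 0 < x)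
  positivity

lemma lintegral_abs_rpow_gaussianReal {s : ℝ} (hs : -1 < s) {v : ℝ≥0} (hv : v ≠ 0) :
    ∫⁻ x, ENNReal.ofReal (|x| ^ s) ∂gaussianReal 0 v =
      ENNReal.ofReal ((2 * v) ^ (s / 2) * Gamma ((s + 1) / 2) / √π) := by
  have : (0 : ℝ) < v := by positivity
  have hΓ : 0 < Gamma ((s + 1) / 2) := Gamma_pos_of_pos (by linarith)
  have hdensity (x : ℝ) : gaussianPDF 0 v x * ENNReal.ofReal (|x| ^ s) =
      ENNReal.ofReal (√(2 * π * v))⁻¹ *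
        ENNReal.ofReal (|x| ^ s * rexp (-(2 * v : ℝ)⁻¹ * |x| ^ 2)) := by
    rw [gaussianPDF, gaussianPDFReal, ← ENNReal.ofReal_mul (by positivity),
      ← ENNReal.ofReal_mul (by positivity), sub_zero, sq_abs, mul_comm (|x| ^ s), mul_assoc,
      neg_mul, neg_div, div_eq_inv_mul]
  rw [gaussianReal_of_var_ne_zero 0 hv, lintegral_withDensity_eq_lintegral_mul₀ (by fun_prop)
    (by fun_prop)]
  simp only [Pi.mul_apply, hdensity]
  rw [lintegral_const_mul' _ _ ENNReal.ofReal_ne_top,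
    lintegral_comp_abs (fun x ↦ ENNReal.ofReal (x ^ s * rexp (-(2 * v : ℝ)⁻¹ * x ^ 2))),
    setLIntegral_Ioi_rpow_mul_exp_neg_mul_sq hs (by positivity), ← ENNReal.ofReal_ofNat,
    ← ENNReal.ofReal_mul (by positivity), ← ENNReal.ofReal_mul (by positivity)]
  have hpow : ((2 * v : ℝ)⁻¹) ^ (-(s + 1) / 2) = (2 * v) ^ (s / 2) * √(2 * v) := by
    rw [inv_rpow (by positivity), ← rpow_neg (by positivity), sqrt_eq_rpow,
      ← rpow_add (by positivity)]
    ring_nf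
  have hsqrt : √(2 * π * v) = √(2 * v) * √π := by
    rw [← sqrt_mul (by positivity)]; ring_nf
  rw [hpow, hsqrt]
  congr 1
  field_simp

end GaussianReal

section Regression

variable {Ω : Type*} [MeasurableSpace Ω] {P : Measure Ω} {X Y : Ω → ℝ}

/-- The determinant of the covariance matrix of the pair `(X, Y)`. -/
noncomputable def covarianceDet (P : Measure Ω) (X Y : Ω → ℝ) : ℝ :=
  Var[X; P] * Var[Y; P] - cov[X, Y; P] ^ 2

lemma covarianceDet_comm (P : Measure Ω) (X Y : Ω → ℝ) :
    covarianceDet P X Y = covarianceDet P Y X := by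
  rw [covarianceDet, covarianceDet, mul_comm, covariance_comm]

lemma variance_pos_of_covarianceDet_pos (h : 0 < covarianceDet P X Y) : 0 < Var[X; P] := by
  refine (variance_nonneg X P).lt_of_ne' fun h₀ ↦ h.not_ge ?_
  rw [covarianceDet, h₀, zero_mul, zero_sub]
  exact neg_nonpos.2 (sq_nonneg _)

/-- The residual of the linear regression of `Y` on `X`, without intercept: for a Gaussian pair it
is the part of `Y` that is independent of `X`. -/
noncomputable def regressionResidual (P : Measure Ω) (X Y : Ω → ℝ) : Ω → ℝ :=
  fun ω ↦ Y ω - cov[X, Y; P] / Var[X; P] * X ω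

lemma covariance_regressionResidual [IsFiniteMeasure P] (hX : MemLp X 2 P) (hY : MemLp Y 2 P)
    (hvar : Var[X; P] ≠ 0) : cov[X, regressionResidual P X Y; P] = 0 := by
  unfold regressionResidual
  rw [covariance_fun_sub_right hX hY (hX.const_mul _), covariance_const_mul_right,
    covariance_self hX.aemeasurable, div_mul_cancel₀ _ hvar, sub_self]

lemma variance_regressionResidual [IsFiniteMeasure P] (hX : MemLp X 2 P) (hY : MemLp Y 2 P)
    (hvar : Var[X; P] ≠ 0) :
    Var[regressionResidual P X Y; P] = covarianceDet P X Y / Var[X; P] := by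
  unfold regressionResidual
  rw [variance_fun_sub hY (hX.const_mul _), covariance_const_mul_right, covariance_comm Y,
    variance_const_mul, covarianceDet]
  field_simp
  ring

lemma hasGaussianLaw_prodMk_regressionResidual
    (h : HasGaussianLaw (fun ω ↦ (X ω, Y ω)) P) :
    HasGaussianLaw (fun ω ↦ (X ω, regressionResidual P X Y ω)) P := by
  simpa [regressionResidual] using h.map_fun ((ContinuousLinearMap.fst ℝ ℝ ℝ).prod
    (ContinuousLinearMap.snd ℝ ℝ ℝ -
      (cov[X, Y; P] / Var[X; P]) • ContinuousLinearMap.fst ℝ ℝ ℝ))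

lemma measurePreserving_shear (μ : Measure ℝ) [SFinite μ] (c : ℝ) :
    MeasurePreserving (fun q : ℝ × ℝ ↦ (q.1, q.2 + c * q.1)) (μ.prod volume) (μ.prod volume) :=
  (MeasurePreserving.id μ).skew_product (by fun_prop)
    (.of_forall fun x ↦ map_add_right_eq_self volume (c * x))

/- Given `X`, the variable `Y` is a translate of its residual, so its conditional density is
bounded by the maximum of the residual's density, uniformly in the value of `X`. -/
lemma map_prodMk_le_smul_prod_volume (h : HasGaussianLaw (fun ω ↦ (X ω, Y ω)) P)
    (hdet : 0 < covarianceDet P X Y) :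
    P.map (fun ω ↦ (X ω, Y ω)) ≤
      ENNReal.ofReal (√(2 * π * (covarianceDet P X Y / Var[X; P])))⁻¹ •
        (P.map X).prod volume := by
  have := h.isProbabilityMeasure
  set Z := regressionResidual P X Y
  have hvar := variance_pos_of_covarianceDet_pos hdet
  have hXZ := hasGaussianLaw_prodMk_regressionResidual h
  have hvarZ := variance_regressionResidual h.fst.memLp_two h.snd.memLp_two hvar.ne'
  have hlawZ : P.map Z ≤
      ENNReal.ofReal (√(2 * π * (covarianceDet P X Y / Var[X; P])))⁻¹ • volume := by
    have hZ₀ : 0 < Var[Z; P] := hvarZ ▸ div_pos hdet hvar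
    rw [hXZ.snd.map_eq_gaussianReal, ← hvarZ]
    simpa only [coe_toNNReal _ hZ₀.le] using
      gaussianReal_le_smul_volume P[Z] (v := Var[Z; P].toNNReal) (toNNReal_pos.2 hZ₀).ne'
  have hind : P.map (fun ω ↦ (X ω, Z ω)) = (P.map X).prod (P.map Z) :=
    (indepFun_iff_map_prod_eq_prod_map_map hXZ.fst.aemeasurable hXZ.snd.aemeasurable).1
      (hXZ.indepFun_of_covariance_eq_zero
        (covariance_regressionResidual h.fst.memLp_two h.snd.memLp_two hvar.ne'))
  have hshear := measurePreserving_shear (P.map X) (cov[X, Y; P] / Var[X; P])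
  calc P.map (fun ω ↦ (X ω, Y ω))
      = (P.map fun ω ↦ (X ω, Z ω)).map
          (fun q ↦ (q.1, q.2 + cov[X, Y; P] / Var[X; P] * q.1)) := by
        rw [AEMeasurable.map_map_of_aemeasurable (by fun_prop) hXZ.aemeasurable]
        simp [Function.comp_def, regressionResidual]
    _ ≤ (ENNReal.ofReal (√(2 * π * (covarianceDet P X Y / Var[X; P])))⁻¹ •
          (P.map X).prod volume).map
            (fun q ↦ (q.1, q.2 + cov[X, Y; P] / Var[X; P] * q.1)) := by
        rw [hind, ← Measure.prod_smul_right]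
        exact Measure.map_mono (Measure.prod_mono le_rfl hlawZ) (by fun_prop)
    _ = _ := by rw [Measure.map_smul, hshear.map_eq]

end Regression

section RatioPowDiff

/-- The integrand of the bound, as a function of the values `x` and `y` of the two variables: with
`r = max |x| |y|` and `t = min |x| |y| / r`, it is `r ^ (m - 2) * t ^ (p - 2) * (1 - t)`. -/
noncomputable def ratioPowDiff (m p x y : ℝ) : ℝ :=
  (max |x| |y|) ^ (m - 2) * (min |x| |y| / max |x| |y|) ^ (p - 2)
    * (1 - min |x| |y| / max |x| |y|)

lemma ratioPowDiff_comm (m p x y : ℝ) : ratioPowDiff m p x y = ratioPowDiff m p y x := by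
  simp only [ratioPowDiff, max_comm |x|, min_comm |x|]

lemma ratioPowDiff_nonneg (m p x y : ℝ) : 0 ≤ ratioPowDiff m p x y := by
  have hmax : 0 ≤ max |x| |y| := le_max_of_le_left (abs_nonneg x)
  have : 0 ≤ min |x| |y| / max |x| |y| := by positivity
  have hratio' : min |x| |y| / max |x| |y| ≤ 1 := div_le_one_of_le₀ min_le_max hmax
  exact mul_nonneg (by positivity) (sub_nonneg.2 hratio')

lemma measurable_ratioPowDiff (m p : ℝ) :
    Measurable fun q : ℝ × ℝ ↦ ratioPowDiff m p q.1 q.2 := by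
  unfold ratioPowDiff
  fun_prop

lemma setLIntegral_abs_le_ratioPowDiff_of_ne_zero (m : ℝ) {p : ℝ} (hp : 1 < p) {x : ℝ}
    (hx : x ≠ 0) :
    ∫⁻ y in {y | |y| ≤ |x|}, ENNReal.ofReal (ratioPowDiff m p x y) =
      ENNReal.ofReal (2 / (p * (p - 1)) * |x| ^ (m - 1)) := by
  have hr : 0 < |x| := abs_pos.2 hx
  have hset : MeasurableSet {y : ℝ | |y| ≤ |x|} := measurableSet_le (by fun_prop) (by fun_prop)
  have hbeta : ∫⁻ t in Set.Ioo (0 : ℝ) 1, ENNReal.ofReal (t ^ (p - 2) * (1 - t)) =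
      ENNReal.ofReal (1 / (p * (p - 1))) := by
    have h := setLIntegral_rpow_mul_one_sub_rpow (sub_pos.2 hp) two_pos
    rw [beta_two_right (sub_pos.2 hp)] at h
    rw [sub_sub, sub_add_cancel, one_add_one_eq_two, show (2 : ℝ) - 1 = 1 by norm_num] at h
    simpa only [rpow_one] using h
  calc ∫⁻ y in {y | |y| ≤ |x|}, ENNReal.ofReal (ratioPowDiff m p x y)
      = ∫⁻ y in {y | |y| ≤ |x|}, ENNReal.ofReal (|x| ^ (m - 2)) *
          ENNReal.ofReal ((|y| / |x|) ^ (p - 2) * (1 - |y| / |x|)) := by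
        refine setLIntegral_congr_fun hset fun y (hy : |y| ≤ |x|) ↦ ?_
        simp only [ratioPowDiff, max_eq_left hy, min_eq_right hy]
        rw [mul_assoc, ENNReal.ofReal_mul (by positivity)]
    _ = ENNReal.ofReal (|x| ^ (m - 2)) *
          (2 * (ENNReal.ofReal |x| * ENNReal.ofReal (1 / (p * (p - 1))))) := by
        rw [lintegral_const_mul' _ _ ENNReal.ofReal_ne_top, setLIntegral_abs_le_comp_abs
          (fun y ↦ ENNReal.ofReal ((y / |x|) ^ (p - 2) * (1 - y / |x|))),
          setLIntegral_Ioo_comp_div (fun t ↦ ENNReal.ofReal (t ^ (p - 2) * (1 - t))) hr, hbeta]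
    _ = ENNReal.ofReal (2 / (p * (p - 1)) * |x| ^ (m - 1)) := by
        rw [← ENNReal.ofReal_mul hr.le, ← ENNReal.ofReal_ofNat, ← ENNReal.ofReal_mul two_pos.le,
          ← ENNReal.ofReal_mul (by positivity), show m - 1 = m - 2 + 1 by ring,
          rpow_add_one hr.ne']
        congr 1
        ring

lemma setLIntegral_abs_le_ratioPowDiff_le (m : ℝ) {p : ℝ} (hp : 1 < p) (x : ℝ) :
    ∫⁻ y in {y | |y| ≤ |x|}, ENNReal.ofReal (ratioPowDiff m p x y) ≤
      ENNReal.ofReal (2 / (p * (p - 1)) * |x| ^ (m - 1)) := by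
  rcases eq_or_ne x 0 with rfl | hx
  · simp
  · exact (setLIntegral_abs_le_ratioPowDiff_of_ne_zero m hp hx).le

variable {Ω : Type*} [MeasurableSpace Ω] {P : Measure Ω} {X Y : Ω → ℝ}

lemma setLIntegral_ratioPowDiff_le_of_map_le (h : AEMeasurable (fun ω ↦ (X ω, Y ω)) P)
    {K : ℝ≥0∞} {μ : Measure ℝ} (hK : P.map (fun ω ↦ (X ω, Y ω)) ≤ K • μ.prod volume)
    (m : ℝ) {p : ℝ} (hp : 1 < p) :
    ∫⁻ ω in {ω | |Y ω| ≤ |X ω|}, ENNReal.ofReal (ratioPowDiff m p (X ω) (Y ω)) ∂P ≤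
      K * (ENNReal.ofReal (2 / (p * (p - 1))) * ∫⁻ x, ENNReal.ofReal (|x| ^ (m - 1)) ∂μ) := by
  have : 0 < p - 1 := sub_pos.2 hp
  set S : Set (ℝ × ℝ) := {q | |q.2| ≤ |q.1|}
  have hS : MeasurableSet S := measurableSet_le (by fun_prop) (by fun_prop)
  have hf : Measurable fun q : ℝ × ℝ ↦ ENNReal.ofReal (ratioPowDiff m p q.1 q.2) :=
    (measurable_ratioPowDiff m p).ennreal_ofReal
  calc ∫⁻ ω in {ω | |Y ω| ≤ |X ω|}, ENNReal.ofReal (ratioPowDiff m p (X ω) (Y ω)) ∂P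
      = ∫⁻ q in S, ENNReal.ofReal (ratioPowDiff m p q.1 q.2) ∂P.map (fun ω ↦ (X ω, Y ω)) := by
        rw [Measure.restrict_map_of_aemeasurable h hS, lintegral_map' hf.aemeasurable h.restrict]
        rfl
    _ ≤ ∫⁻ q in S, ENNReal.ofReal (ratioPowDiff m p q.1 q.2) ∂(K • μ.prod volume) :=
        lintegral_mono' (Measure.restrict_mono le_rfl hK) le_rfl
    _ = K * ∫⁻ q in S, ENNReal.ofReal (ratioPowDiff m p q.1 q.2) ∂μ.prod volume := by
        rw [Measure.restrict_smul, lintegral_smul_measure, smul_eq_mul]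
    _ ≤ K * ∫⁻ x, ENNReal.ofReal (2 / (p * (p - 1)) * |x| ^ (m - 1)) ∂μ := by
        gcongr
        rw [← lintegral_indicator hS]
        refine (lintegral_prod_le _).trans (lintegral_mono fun x ↦ ?_)
        refine le_of_eq_of_le ?_ (setLIntegral_abs_le_ratioPowDiff_le m hp x)
        exact lintegral_indicator (hS.preimage measurable_prodMk_left) _
    _ = K * (ENNReal.ofReal (2 / (p * (p - 1))) * ∫⁻ x, ENNReal.ofReal (|x| ^ (m - 1)) ∂μ) := by
        rw [← lintegral_const_mul' _ _ ENNReal.ofReal_ne_top]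
        simp only [← ENNReal.ofReal_mul (show (0 : ℝ) ≤ 2 / (p * (p - 1)) by positivity)]

lemma inv_sqrt_mul_rpow_mul_Gamma {a D : ℝ} (ha : 0 < a) (hD : 0 < D) (m : ℝ) :
    (√(2 * π * (D / a)))⁻¹ * ((2 * a) ^ ((m - 1) / 2) * Gamma (m / 2) / √π) =
      2 ^ (m / 2) * Gamma (m / 2) / (2 * π) * a ^ (m / 2) / √D := by
  have hsqrt : √(2 * π * (D / a)) = 2 * √π * √D / √(2 * a) := by
    rw [show 2 * π * (D / a) = 2 ^ 2 * π * D / (2 * a) by field_simp, sqrt_div (by positivity),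
      sqrt_mul (by positivity), sqrt_mul (by positivity), sqrt_sq two_pos.le]
  have hpow : (2 * a) ^ ((m - 1) / 2) = 2 ^ (m / 2) * a ^ (m / 2) / √(2 * a) := by
    rw [sub_div, rpow_sub (by positivity), ← sqrt_eq_rpow, mul_rpow two_pos.le ha.le]
  have hpi : √π ^ 2 = π := sq_sqrt pi_pos.le
  rw [hsqrt, hpow]
  field_simp
  rw [hpi, mul_comm]

lemma setLIntegral_ratioPowDiff_le (h : HasGaussianLaw (fun ω ↦ (X ω, Y ω)) P)
    (hX : P[X] = 0) (hdet : 0 < covarianceDet P X Y) {m p : ℝ} (hm : 0 < m) (hp : 1 < p) :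
    ∫⁻ ω in {ω | |Y ω| ≤ |X ω|}, ENNReal.ofReal (ratioPowDiff m p (X ω) (Y ω)) ∂P ≤
      ENNReal.ofReal (2 ^ (m / 2) * Gamma (m / 2) / π * Var[X; P] ^ (m / 2) /
        √(covarianceDet P X Y) / (p * (p - 1))) := by
  have hvar := variance_pos_of_covarianceDet_pos hdet
  have hmoment : ∫⁻ x, ENNReal.ofReal (|x| ^ (m - 1)) ∂P.map X =
      ENNReal.ofReal ((2 * Var[X; P]) ^ ((m - 1) / 2) * Gamma (m / 2) / √π) := by
    rw [h.fst.map_eq_gaussianReal, hX,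
      lintegral_abs_rpow_gaussianReal (by linarith) (toNNReal_pos.2 hvar).ne',
      coe_toNNReal _ hvar.le, sub_add_cancel]
  have hp' : 0 < p - 1 := sub_pos.2 hp
  refine (setLIntegral_ratioPowDiff_le_of_map_le h.aemeasurable
    (map_prodMk_le_smul_prod_volume h hdet) m hp).trans_eq ?_
  rw [hmoment, ← ENNReal.ofReal_mul (by positivity), ← ENNReal.ofReal_mul (by positivity),
    mul_left_comm, inv_sqrt_mul_rpow_mul_Gamma hvar hdet]
  congr 1
  field_simp

lemma lintegral_ratioPowDiff_le (h : HasGaussianLaw (fun ω ↦ (X ω, Y ω)) P)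
    (hX : P[X] = 0) (hY : P[Y] = 0) (hdet : 0 < covarianceDet P X Y) {m p : ℝ} (hm : 0 < m)
    (hp : 1 < p) :
    ∫⁻ ω, ENNReal.ofReal (ratioPowDiff m p (X ω) (Y ω)) ∂P ≤
      ENNReal.ofReal (2 * (2 ^ (m / 2) * Gamma (m / 2) / π) *
        max Var[X; P] Var[Y; P] ^ (m / 2) / √(covarianceDet P X Y) / (p * (p - 1))) := by
  have : 0 < p - 1 := sub_pos.2 hp
  have : 0 < Gamma (m / 2) := Gamma_pos_of_pos (half_pos hm)
  have hvarX := variance_nonneg X P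
  have hvarY := variance_nonneg Y P
  have hYX : HasGaussianLaw (fun ω ↦ (Y ω, X ω)) P :=
    h.map_equiv_fun (ContinuousLinearEquiv.prodComm ℝ ℝ ℝ)
  have hunion : {ω | |Y ω| ≤ |X ω|} ∪ {ω | |X ω| ≤ |Y ω|} = Set.univ :=
    Set.eq_univ_of_forall fun ω ↦ le_total |Y ω| |X ω|
  have hXbound := setLIntegral_ratioPowDiff_le h hX hdet hm hp
  have hYbound := setLIntegral_ratioPowDiff_le hYX hY (covarianceDet_comm P X Y ▸ hdet) hm hp
  simp only [ratioPowDiff_comm m p (Y _), covarianceDet_comm P Y] at hYbound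
  rw [← setLIntegral_univ, ← hunion]
  refine (lintegral_union_le _ _ _).trans ((add_le_add hXbound hYbound).trans ?_)
  rw [← ENNReal.ofReal_add (by positivity) (by positivity), ← add_div, ← add_div, ← mul_add]
  refine ENNReal.ofReal_le_ofReal ?_
  rw [mul_assoc 2, mul_left_comm]
  gcongr
  rw [two_mul]
  gcongr
  exacts [le_max_left _ _, le_max_right _ _]

end RatioPowDiff

section Correlation

variable {Ω : Type*} [MeasurableSpace Ω] {P : Measure Ω} [IsProbabilityMeasure P] {X Y : Ω → ℝ}

lemma variance_mul_one_sub_corr_sq (hX : MemLp X 2 P) (hY : MemLp Y 2 P)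
    (hvarX : Var[X; P] ≠ 0) (hvarY : Var[Y; P] ≠ 0) :
    Var[X; P] * Var[Y; P] * (1 - corr P X Y ^ 2) = covarianceDet P X Y := by
  have hcov : covar P X Y = cov[X, Y; P] := (covariance_eq_sub hX hY).symm
  rw [corr, hcov, div_pow, sq_sqrt (mul_nonneg (variance_nonneg X P) (variance_nonneg Y P)),
    covarianceDet]
  field_simp

lemma covarianceDet_pos_of_abs_corr_lt_one (hX : MemLp X 2 P) (hY : MemLp Y 2 P)
    (hvarX : Var[X; P] ≠ 0) (hvarY : Var[Y; P] ≠ 0) (hcorr : |corr P X Y| < 1) :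
    0 < covarianceDet P X Y := by
  rw [← variance_mul_one_sub_corr_sq hX hY hvarX hvarY]
  have hposX := (variance_nonneg X P).lt_of_ne' hvarX
  have hposY := (variance_nonneg Y P).lt_of_ne' hvarY
  exact mul_pos (mul_pos hposX hposY) (sub_pos.2 ((sq_lt_one_iff_abs_lt_one _).2 hcorr))

end Correlation

section StdGaussianPi

variable {n : ℕ}

lemma hasGaussianLaw_linForm_prodMk (M₁ M₂ : Fin n → ℝ) :
    HasGaussianLaw (fun x ↦ (linForm M₁ x, linForm M₂ x)) (stdGaussianPi n) := by
  have hcoord : HasGaussianLaw (fun (x : Fin n → ℝ) i ↦ x i) (stdGaussianPi n) := by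
    refine iIndepFun.hasGaussianLaw (fun i ↦ HasLaw.hasGaussianLaw (μ := gaussianReal 0 1)
      (measurePreserving_eval (fun _ ↦ gaussianReal 0 1) i).hasLaw) ?_
    exact iIndepFun_pi (X := fun _ ↦ id) fun _ ↦ aemeasurable_id
  simpa [linForm] using hcoord.map_fun
    ((∑ i, M₁ i • ContinuousLinearMap.proj (R := ℝ) (φ := fun _ : Fin n ↦ ℝ) i).prod
      (∑ i, M₂ i • ContinuousLinearMap.proj (R := ℝ) (φ := fun _ : Fin n ↦ ℝ) i))

lemma integral_linForm (M : Fin n → ℝ) : ∫ x, linForm M x ∂stdGaussianPi n = 0 := by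
  have hint (i : Fin n) : Integrable (fun x : Fin n → ℝ ↦ x i) (stdGaussianPi n) :=
    integrable_eval IsGaussian.integrable_id
  have hmean (i : Fin n) : ∫ x : Fin n → ℝ, x i ∂stdGaussianPi n = 0 :=
    integral_eval.trans integral_id_gaussianReal
  simp only [linForm]
  rw [integral_finsetSum _ fun i _ ↦ (hint i).const_mul _]
  simp [integral_const_mul, hmean]

lemma variance_linForm (M : Fin n → ℝ) :
    Var[linForm M; stdGaussianPi n] = ∑ i, M i ^ 2 := by
  have hsum : linForm M = ∑ i, fun x : Fin n → ℝ ↦ M i * x i := by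
    ext x
    simp [linForm]
  rw [hsum, stdGaussianPi, variance_sum_pi (X := fun i x ↦ M i * x)
    fun i ↦ (memLp_id_gaussianReal 2).const_mul (M i)]
  refine Finset.sum_congr rfl fun i _ ↦ ?_
  rw [variance_const_mul, variance_fun_id_gaussianReal, NNReal.coe_one, mul_one]

lemma variance_linForm_ne_zero {M : Fin n → ℝ} (hM : M ≠ 0) :
    Var[linForm M; stdGaussianPi n] ≠ 0 := by
  obtain ⟨i, hi⟩ := Function.ne_iff.1 hM
  rw [variance_linForm]
  exact (Finset.sum_pos' (fun _ _ ↦ sq_nonneg _) ⟨i, Finset.mem_univ i, sq_pos_of_ne_zero hi⟩).ne'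

end StdGaussianPi

/-- Integrability is part of the claim because the Bochner integral of a non-integrable function
is `0`. -/
theorem integral_bound_ratio_pow_diff_general {Ω : Type*} [MeasurableSpace Ω] {P : Measure Ω}
    {X Y : Ω → ℝ} (h : HasGaussianLaw (fun ω ↦ (X ω, Y ω)) P) (hX : P[X] = 0) (hY : P[Y] = 0)
    (hvarX : Var[X; P] ≠ 0) (hvarY : Var[Y; P] ≠ 0) (hcorr : |corr P X Y| < 1)
    {m p : ℝ} (hm : 0 < m) (hp : 1 < p) :
    Integrable (fun ω ↦ ratioPowDiff m p (X ω) (Y ω)) P ∧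
      ∫ ω, ratioPowDiff m p (X ω) (Y ω) ∂P ≤
        2 * (2 ^ (m / 2) * Gamma (m / 2) / π) * max Var[X; P] Var[Y; P] ^ (m / 2) /
          √(Var[X; P] * Var[Y; P] * (1 - corr P X Y ^ 2)) / (p * (p - 1)) := by
  have := h.isProbabilityMeasure
  have hdet := covarianceDet_pos_of_abs_corr_lt_one h.fst.memLp_two h.snd.memLp_two hvarX hvarY
    hcorr
  have hbound := lintegral_ratioPowDiff_le h hX hY hdet hm hp
  have hmeas : AEStronglyMeasurable (fun ω ↦ ratioPowDiff m p (X ω) (Y ω)) P :=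
    ((measurable_ratioPowDiff m p).comp_aemeasurable h.aemeasurable).aestronglyMeasurable
  have hnonneg : 0 ≤ᵐ[P] fun ω ↦ ratioPowDiff m p (X ω) (Y ω) :=
    .of_forall fun ω ↦ ratioPowDiff_nonneg m p (X ω) (Y ω)
  refine ⟨(lintegral_ofReal_ne_top_iff_integrable hmeas hnonneg).1
    (hbound.trans_lt ENNReal.ofReal_lt_top).ne, ?_⟩
  rw [integral_eq_lintegral_of_nonneg_ae hnonneg hmeas,
    variance_mul_one_sub_corr_sq h.fst.memLp_two h.snd.memLp_two hvarX hvarY]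
  have : 0 < Gamma (m / 2) := Gamma_pos_of_pos (half_pos hm)
  have : 0 < p - 1 := sub_pos.2 hp
  have hvar := variance_nonneg X P
  exact ENNReal.toReal_le_of_le_ofReal (by positivity) hbound

/-- **Lemma (second integral bound).** Let `g ~ N(0, I_n)`, `X₁ = M₁ g`, `Y₁ = M₂ g` with
`M₁, M₂ ≠ 0` and `|Corr(X₁, Y₁)| < 1`. For every `m > 0` there is `C(m) > 0` such that
for all `p > 1`,
`E[(max(|X₁|,|Y₁|))^(m-2) (min/max)^(p-2) (1 - min/max)] ≤ C(m, X₁, Y₁)/(p (p-1))`,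
where `C(m, X₁, Y₁) = C(m) (max(Var X₁, Var Y₁))^(m/2) / sqrt(Var X₁ · Var Y₁ · (1 - Corr(X₁,Y₁)²))`. -/
theorem integral_bound_ratio_pow_diff
    (m : ℝ) (hm : 0 < m) :
    ∃ C : ℝ, 0 < C ∧
      ∀ (n : ℕ) (M₁ M₂ : Fin n → ℝ), M₁ ≠ 0 → M₂ ≠ 0 →
        |corr (stdGaussianPi n) (linForm M₁) (linForm M₂)| < 1 →
        ∀ p : ℝ, 1 < p →
          (∫ x, (max |linForm M₁ x| |linForm M₂ x|) ^ (m - 2)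
              * (min |linForm M₁ x| |linForm M₂ x|
                  / max |linForm M₁ x| |linForm M₂ x|) ^ (p - 2)
              * (1 - min |linForm M₁ x| |linForm M₂ x|
                  / max |linForm M₁ x| |linForm M₂ x|) ∂(stdGaussianPi n))
            ≤ C * (max (variance (linForm M₁) (stdGaussianPi n))
                    (variance (linForm M₂) (stdGaussianPi n))) ^ (m / 2)
              / Real.sqrt (variance (linForm M₁) (stdGaussianPi n)
                  * variance (linForm M₂) (stdGaussianPi n)
                  * (1 - corr (stdGaussianPi n) (linForm M₁) (linForm M₂) ^ 2))
              / (p * (p - 1)) := by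
  have : 0 < Gamma (m / 2) := Gamma_pos_of_pos (half_pos hm)
  refine ⟨2 * (2 ^ (m / 2) * Gamma (m / 2) / π), by positivity, fun n M₁ M₂ h₁ h₂ hcorr p hp ↦ ?_⟩
  exact (integral_bound_ratio_pow_diff_general (hasGaussianLaw_linForm_prodMk M₁ M₂)
    (integral_linForm M₁) (integral_linForm M₂) (variance_linForm_ne_zero h₁)
    (variance_linForm_ne_zero h₂) hcorr hm hp).2
end
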